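/- Let D be a non-dictatorial, unidimensional domain. There exists no invariant, tops-only and strategy-proof rule f : D^2 → A if and only if D is a semi-hybrid domain satisfying the unique seconds property. -/

import Mathlib

open Classical

set_option linter.unusedSectionVars false
set_option linter.unusedVariables false

/-- A strict preference over `A`, represented as a ranking bijection:
`P k` is the `(k+1)`-th ranked alternative. -/
abbrev Pref (A : Type*) [Fintype A] := Fin (Fintype.card A) ≃ A

variable {A : Type*} [Fintype A] [DecidableEq A] [Nonempty A]

/-- `rk P k` : the `(k+1)`-th ranked alternative of `P` (0-indexed, so `rk P 0 = r₁(P)`). -/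
noncomputable def rk (P : Pref A) (k : ℕ) : A :=
  if h : k < Fintype.card A then P ⟨k, h⟩ else Classical.arbitrary A

/-- The peak `r₁(P)`. -/
noncomputable def peak (P : Pref A) : A := rk P 0

/-- The second-ranked alternative `r₂(P)`. -/
noncomputable def second (P : Pref A) : A := rk P 1

/-- `a` is strictly preferred to `b` under `P`. -/
def prefers (P : Pref A) (a b : A) : Prop := P.symm a < P.symm b

/-- Two preferences are completely reversed. -/
def Reversed (P P' : Pref A) : Prop := ∀ a b : A, prefers P a b ↔ prefers P' b a

/-- A profile lies in the domain `D`. -/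
def InDom (D : Set (Pref A)) {n : ℕ} (P : Fin n → Pref A) : Prop := ∀ i, P i ∈ D

/-- Unanimity (an SCF satisfying it is called a rule). -/
def IsRule (D : Set (Pref A)) {n : ℕ} (f : (Fin n → Pref A) → A) : Prop :=
  ∀ P : Fin n → Pref A, InDom D P → ∀ a : A, (∀ i, peak (P i) = a) → f P = a

/-- Strategy-proofness (relative to the domain `D`). -/
def StrategyProof (D : Set (Pref A)) {n : ℕ} (f : (Fin n → Pref A) → A) : Prop :=
  ∀ P : Fin n → Pref A, InDom D P → ∀ i : Fin n, ∀ Q ∈ D,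
    f P = f (Function.update P i Q) ∨ prefers (P i) (f P) (f (Function.update P i Q))

/-- The tops-only property. -/
def TopsOnly (D : Set (Pref A)) {n : ℕ} (f : (Fin n → Pref A) → A) : Prop :=
  ∀ P P' : Fin n → Pref A, InDom D P → InDom D P' →
    (∀ i, peak (P i) = peak (P' i)) → f P = f P'

/-- Anonymity. -/
def Anonymous (D : Set (Pref A)) {n : ℕ} (f : (Fin n → Pref A) → A) : Prop :=
  ∀ P : Fin n → Pref A, InDom D P → ∀ σ : Equiv.Perm (Fin n), f (P ∘ σ) = f P

/-- `f` behaves like a dictatorship on `B`. -/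
def DictatorOn (D : Set (Pref A)) {n : ℕ} (f : (Fin n → Pref A) → A) (B : Set A) : Prop :=
  ∃ i : Fin n, ∀ P : Fin n → Pref A, InDom D P → (∀ j, peak (P j) ∈ B) → f P = peak (P i)

/-- `f` is a dictatorship. -/
def Dictatorship (D : Set (Pref A)) {n : ℕ} (f : (Fin n → Pref A) → A) : Prop :=
  DictatorOn D f Set.univ

/-- A dictatorial domain. -/
def DictatorialDomain (D : Set (Pref A)) : Prop :=
  ∀ n : ℕ, 2 ≤ n → ∀ f : (Fin n → Pref A) → A,
    IsRule D f → StrategyProof D f → Dictatorship D f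

/-- A tops-only domain. -/
def TopsOnlyDomain (D : Set (Pref A)) : Prop :=
  ∀ n : ℕ, 2 ≤ n → ∀ f : (Fin n → Pref A) → A,
    IsRule D f → StrategyProof D f → TopsOnly D f

/-- Adjacency of two alternatives relative to the domain `D`. -/
def DomAdjacent (D : Set (Pref A)) (a b : A) : Prop :=
  ∃ P ∈ D, ∃ P' ∈ D, peak P = a ∧ second P = b ∧ peak P' = b ∧ second P' = a ∧
    ∀ k : ℕ, 2 ≤ k → rk P k = rk P' k

/-- The adjacency graph `G_∼` of the domain `D`. -/
noncomputable def adjGraph (D : Set (Pref A)) : SimpleGraph A :=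
  SimpleGraph.fromRel (DomAdjacent D)

/-- Path-connectedness of the domain. -/
def PathConnectedDom (D : Set (Pref A)) : Prop := (adjGraph D).Connected

/-- Diversity: the domain contains two completely reversed preferences. -/
def Diversity (D : Set (Pref A)) : Prop := ∃ P ∈ D, ∃ P' ∈ D, Reversed P P'

/-- `S(D^a)`: the set of alternatives second-ranked in some preference of `D` with peak `a`. -/
def secondsSet (D : Set (Pref A)) (a : A) : Set A := {b | ∃ P ∈ D, peak P = a ∧ second P = b}

/-- Leaf symmetry. -/
def LeafSymmetry (D : Set (Pref A)) : Prop :=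
  ∀ x : A, (∃! y, (adjGraph D).Adj x y) →
    (∃ u ∈ secondsSet D x, ∃ v ∈ secondsSet D x, u ≠ v) →
    ∃ z ∈ secondsSet D x, ¬ (adjGraph D).Adj x z ∧ x ∈ secondsSet D z

/-- Unidimensionality: path-connectedness, diversity and leaf symmetry. -/
def Unidimensional (D : Set (Pref A)) : Prop :=
  PathConnectedDom D ∧ Diversity D ∧ LeafSymmetry D

/-- The unique seconds property. -/
def UniqueSeconds (D : Set (Pref A)) : Prop := ∃ x b : A, secondsSet D x = {b}

/-- Minimal richness. -/
def MinimallyRich (D : Set (Pref A)) : Prop := ∀ a : A, ∃ P ∈ D, peak P = a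

/-- The vertex set `⟨x, y|T⟩` of the (in a tree, unique) shortest path between `x` and `y`. -/
def intv (T : SimpleGraph A) (x y : A) : Set A :=
  {z | T.dist x z + T.dist z y = T.dist x y}

/-- `a'` is the projection of `a` onto `B` in `T`. -/
def IsProjPt (T : SimpleGraph A) (B : Set A) (a a' : A) : Prop :=
  a' ∈ B ∧ ∀ b ∈ B, a' ∈ intv T a b

/-- The projection `Proj(a, B)` of `a` onto a path-closed set `B` in the tree `T`. -/
noncomputable def projOn (T : SimpleGraph A) (B : Set A) (a : A) : A :=
  if h : ∃ a', IsProjPt T B a a' then h.choose else a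

/-- `Γ(P)`: the vertex set of the minimal subtree of `T` spanning all the peaks. -/
def gammaSet (T : SimpleGraph A) {n : ℕ} (P : Fin n → Pref A) : Set A :=
  {c | ∃ i j : Fin n, c ∈ intv T (peak (P i)) (peak (P j))}

/-- The projection rule on `T` w.r.t. `xbar`. -/
noncomputable def projRule (T : SimpleGraph A) (xbar : A) {n : ℕ}
    (P : Fin n → Pref A) : A :=
  projOn T (gammaSet T P) xbar

/-- Single-peakedness on a tree. -/
def SinglePeaked (T : SimpleGraph A) (P : Pref A) : Prop :=
  ∀ c d : A, c ≠ d → c ∈ intv T (peak P) d → prefers P c d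

/-- Semi-single-peakedness on `T` w.r.t. the threshold `xbar`. -/
def SemiSP (T : SimpleGraph A) (xbar : A) (P : Pref A) : Prop :=
  (∀ c d : A, c ∈ intv T (peak P) xbar → d ∈ intv T (peak P) xbar → c ≠ d →
    c ∈ intv T (peak P) d → prefers P c d) ∧
  (∀ c : A, c ∉ intv T (peak P) xbar →
    prefers P (projOn T (intv T (peak P) xbar) c) c)

/-- A semi-single-peaked domain. -/
def SemiSPDomain (D : Set (Pref A)) : Prop :=
  ∃ (T : SimpleGraph A) (xbar : A), T.IsTree ∧
    D ⊆ {P | SemiSP T xbar P} ∧ (adjGraph D).Connected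

/-- `A^{a⇀b}`: the alternatives whose path to `b` goes through `a`. -/
def sideSet (T : SimpleGraph A) (a b : A) : Set A := {z | a ∈ intv T z b}

/-- `x = max^P(B)`: `x` is `P`'s best alternative of `B`. -/
def IsBestOf (P : Pref A) (x : A) (B : Set A) : Prop :=
  x ∈ B ∧ ∀ y ∈ B, y ≠ x → prefers P x y

/-- `a` and `b` are dual-thresholds in the tree `T`. -/
def DualThresholds (T : SimpleGraph A) (a b : A) : Prop :=
  a ≠ b ∧ ∀ c : A, c ∉ intv T a b →
    projOn T (intv T a b) c = a ∨ projOn T (intv T a b) c = b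

/-- An `(a,b)`-semi-hybrid preference on `T`. -/
def SemiHybridPref (T : SimpleGraph A) (a b : A) (P : Pref A) : Prop :=
  (peak P ∈ sideSet T a b \ {a} → SemiSP T a P ∧ IsBestOf P b (sideSet T b a)) ∧
  (peak P ∈ sideSet T b a \ {b} → SemiSP T b P ∧ IsBestOf P a (sideSet T a b)) ∧
  (peak P ∈ intv T a b → IsBestOf P a (sideSet T a b) ∧ IsBestOf P b (sideSet T b a))

/-- `x` is a leaf of the subgraph of `G` induced on `B`. -/
def IsLeafOn (G : SimpleGraph A) (B : Set A) (x : A) : Prop :=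
  x ∈ B ∧ ∃! y, y ∈ B ∧ G.Adj x y

/-- `D` is an `(a,b)`-semi-hybrid domain on the tree `T`. -/
def SemiHybridDomainOn (D : Set (Pref A)) (T : SimpleGraph A) (a b : A) : Prop :=
  T.IsTree ∧ DualThresholds T a b ∧ D ⊆ {P | SemiHybridPref T a b P} ∧
  (adjGraph D).Connected ∧
  (¬ ∃ (T' : SimpleGraph A) (a' b' : A), T'.IsTree ∧ DualThresholds T' a' b' ∧
      D ⊆ {P | SemiHybridPref T' a' b' P} ∧ intv T' a' b' ⊂ intv T a b) ∧
  ((adjGraph D).IsTree →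
    ∀ x : A, IsLeafOn (adjGraph D) (intv T a b) x →
      ∃ P ∈ D, ¬ SemiSP (adjGraph D) x P)

/-- `D` is a semi-hybrid domain. -/
def SemiHybridDomain (D : Set (Pref A)) : Prop :=
  ∃ (T : SimpleGraph A) (a b : A), SemiHybridDomainOn D T a b

/-- An `(a,b)`-hybrid preference on `T`. -/
def HybridPref (T : SimpleGraph A) (a b : A) (P : Pref A) : Prop :=
  (∀ y z : A, ((y ∈ sideSet T a b ∧ z ∈ sideSet T a b) ∨
      (y ∈ sideSet T b a ∧ z ∈ sideSet T b a)) → y ≠ z →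
    y ∈ intv T (peak P) z → prefers P y z) ∧
  (peak P ∈ sideSet T a b \ {a} → IsBestOf P a (intv T a b)) ∧
  (peak P ∈ sideSet T b a \ {b} → IsBestOf P b (intv T a b))

/-- `D` is an `(a,b)`-hybrid domain on the tree `T`. -/
def HybridDomainOn (D : Set (Pref A)) (T : SimpleGraph A) (a b : A) : Prop :=
  T.IsTree ∧ DualThresholds T a b ∧ D ⊆ {P | HybridPref T a b P} ∧
  (adjGraph D).Connected ∧
  (¬ ∃ (T' : SimpleGraph A) (a' b' : A), T'.IsTree ∧ DualThresholds T' a' b' ∧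
      D ⊆ {P | HybridPref T' a' b' P} ∧ intv T' a' b' ⊂ intv T a b) ∧
  3 ≤ (intv T a b).ncard

/-- `f` is an `(a,b)`-hybrid rule on the tree `T`. -/
def IsHybridRule (D : Set (Pref A)) {n : ℕ} (f : (Fin n → Pref A) → A)
    (T : SimpleGraph A) (a b : A) : Prop :=
  T.IsTree ∧ DualThresholds T a b ∧ 3 ≤ (intv T a b).ncard ∧
  ∃ i : Fin n, ∀ P : Fin n → Pref A, InDom D P →
    (peak (P i) ∈ intv T a b → f P = peak (P i)) ∧
    (peak (P i) ∈ sideSet T a b \ {a} → f P = projOn T (gammaSet T P) a) ∧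
    (peak (P i) ∈ sideSet T b a \ {b} → f P = projOn T (gammaSet T P) b)

/-- The PNT rule on `T` w.r.t. the edge `(x, y)`, with the two distinguished voters `i, j`. -/
noncomputable def pntRule (T : SimpleGraph A) (x y : A) {n : ℕ} (i j : Fin n)
    (P : Fin n → Pref A) : A :=
  if peak (P i) ∈ sideSet T y x then peak (P i)
  else if peak (P j) ∈ sideSet T x y then projOn T (gammaSet T P) x
  else if prefers (P j) x y then x else y

/-- `(x, y)` is a critical spot in `T` for the domain `D`. -/
def CriticalSpot (D : Set (Pref A)) (T : SimpleGraph A) (x y : A) : Prop :=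
  T.Adj x y ∧
  (∀ P ∈ D, peak P ∈ sideSet T x y → SemiSP T y P) ∧
  (∀ P ∈ D, peak P ∈ sideSet T y x → IsBestOf P x (sideSet T x y)) ∧
  (∃ P ∈ D, ∃ P' ∈ D, peak P = peak P' ∧ peak P ∈ sideSet T y x ∧
    prefers P y x ∧ prefers P' x y)

/-- `x` is a path in the graph `G` (pairwise distinct, consecutive vertices adjacent). -/
def IsPathIn (G : SimpleGraph A) {v : ℕ} (x : Fin v → A) : Prop :=
  Function.Injective x ∧
  ∀ (k : ℕ) (h : k + 1 < v), G.Adj (x ⟨k, Nat.lt_of_succ_lt h⟩) (x ⟨k + 1, h⟩)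

/-- `x` is a cycle in the graph `G`. -/
def IsCycleIn (G : SimpleGraph A) {v : ℕ} (x : Fin v → A) : Prop :=
  Function.Injective x ∧
  (∀ (k : ℕ) (h : k + 1 < v), G.Adj (x ⟨k, Nat.lt_of_succ_lt h⟩) (x ⟨k + 1, h⟩)) ∧
  ∀ (h : 0 < v), G.Adj (x ⟨v - 1, Nat.sub_lt h Nat.one_pos⟩) (x ⟨0, h⟩)

/-- The line `L^A` induced by the ranking of the preference `P`. -/
noncomputable def lineOf (P : Pref A) : SimpleGraph A :=
  SimpleGraph.fromRel (fun a b =>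
    ∃ k : ℕ, k + 1 < Fintype.card A ∧ rk P k = a ∧ rk P (k + 1) = b)

/-- The median of three natural numbers. -/
def med3 (a b c : ℕ) : ℕ := max (min a b) (min (max a b) c)

/-- The two-voter profile in which voter `i` reports `Pi` and the other voter reports `Q`. -/
noncomputable def prof2 (i : Fin 2) (Pi Q : Pref A) : Fin 2 → Pref A :=
  Function.update (fun _ => Q) i Pi


/-! ### Basic facts on preferences -/

theorem pr_irrefl (P : Pref A) (a : A) : ¬ prefers P a a := lt_irrefl _

theorem pr_asymm {P : Pref A} {a b : A} (h : prefers P a b) : ¬ prefers P b a :=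
  lt_asymm h

theorem pr_trans {P : Pref A} {a b c : A} (h : prefers P a b) (h' : prefers P b c) :
    prefers P a c := lt_trans h h'

theorem pr_ne {P : Pref A} {a b : A} (h : prefers P a b) : a ≠ b := by
  rintro rfl; exact pr_irrefl _ _ h

theorem pr_total (P : Pref A) {a b : A} (h : a ≠ b) : prefers P a b ∨ prefers P b a :=
  lt_or_gt_of_ne (fun e => h (P.symm.injective e))

theorem peak_eq (P : Pref A) (h : 0 < Fintype.card A) : peak P = P ⟨0, h⟩ := by
  simp [peak, rk, h]

theorem peak_best {P : Pref A} {a : A} (h : a ≠ peak P) : prefers P (peak P) a := by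
  have hc : 0 < Fintype.card A := Fintype.card_pos
  rw [peak_eq P hc] at *
  unfold prefers
  rw [Equiv.symm_apply_apply]
  rcases Nat.eq_zero_or_pos (P.symm a).val with h0 | h0
  · exfalso; apply h
    apply P.symm.injective
    rw [Equiv.symm_apply_apply]
    exact Fin.ext h0
  · exact h0

theorem not_pr_peak {P : Pref A} {a : A} : ¬ prefers P a (peak P) := by
  intro h
  exact pr_asymm h (peak_best (pr_ne h))

theorem second_ne_peak (h2 : 2 ≤ Fintype.card A) (P : Pref A) : second P ≠ peak P := by
  have h0 : 0 < Fintype.card A := by omega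
  have h1 : 1 < Fintype.card A := by omega
  simp only [second, peak, rk, h0, h1, dif_pos]
  intro h
  have := P.injective h
  simp at this

theorem second_best (h2 : 2 ≤ Fintype.card A) {P : Pref A} {a : A} (h : a ≠ peak P)
    (h' : a ≠ second P) : prefers P (second P) a := by
  have h0 : 0 < Fintype.card A := by omega
  have h1 : 1 < Fintype.card A := by omega
  simp only [second, peak, rk, h0, h1, dif_pos] at *
  unfold prefers
  rw [Equiv.symm_apply_apply]
  have e0 : (P.symm a).val ≠ 0 := fun e => h (by
    apply P.symm.injective; rw [Equiv.symm_apply_apply]; exact Fin.ext e)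
  have e1 : (P.symm a).val ≠ 1 := fun e => h' (by
    apply P.symm.injective; rw [Equiv.symm_apply_apply]; exact Fin.ext e)
  rw [Fin.lt_def]; simp only; omega

/-- something better than the second must be the peak -/
theorem eq_peak_of_pr_second (h2 : 2 ≤ Fintype.card A) {P : Pref A} {a : A}
    (h : prefers P a (second P)) : a = peak P := by
  by_contra hne
  exact pr_asymm h (second_best h2 hne (pr_ne h))

theorem symm_rk {P : Pref A} (a : A) : rk P (P.symm a).val = a := by
  simp [rk]

theorem rk_inj {P : Pref A} {k : ℕ} (hk : k < Fintype.card A) {a : A} (h : rk P k = a) :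
    (P.symm a).val = k := by
  simp only [rk, hk, dif_pos] at h
  rw [← h, Equiv.symm_apply_apply]

/-- Two preferences that differ only by a swap of the two top alternatives. -/
theorem swap_lemma (h2 : 2 ≤ Fintype.card A) {P P' : Pref A} (h3 : peak P' = second P)
    (h4 : second P' = peak P)
    (h5 : ∀ k : ℕ, 2 ≤ k → rk P k = rk P' k) {u v : A} (hu : prefers P u v)
    (hv : prefers P' v u) : u = peak P ∧ v = second P := by
  have key : ∀ c, c ≠ peak P → c ≠ second P → (P'.symm c).val = (P.symm c).val ∧ 2 ≤ (P.symm c).val := by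
    intro c hc hc'
    have h2' : 2 ≤ (P.symm c).val := by
      by_contra hlt
      have : (P.symm c).val = 0 ∨ (P.symm c).val = 1 := by omega
      have e := symm_rk (P := P) c
      rcases this with h | h
      · rw [h] at e; exact hc e.symm
      · rw [h] at e; exact hc' e.symm
    refine ⟨?_, h2'⟩
    have e := symm_rk (P := P) c
    rw [h5 _ h2'] at e
    exact rk_inj (P.symm c).isLt e
  have hup : u = peak P := by
    by_contra hup
    by_cases hus : u = second P
    · subst hus
      rw [← h3] at hv
      exact not_pr_peak hv
    · by_cases hvp : v = peak P
      · subst hvp; exact not_pr_peak hu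
      · by_cases hvs : v = second P
        · subst hvs; exact pr_asymm hu (second_best h2 hup hus)
        · have k1 := key u hup hus
          have k2 := key v hvp hvs
          unfold prefers at hu hv
          rw [Fin.lt_def] at hu hv
          omega
  refine ⟨hup, ?_⟩
  by_contra hvs
  have hvp : v ≠ peak P := by rw [← hup]; exact (pr_ne hu).symm
  have : v ≠ second P' := by rw [h4]; exact hvp
  have h' : v ≠ peak P' := by rw [h3]; exact hvs
  have := second_best h2 h' this
  rw [h4, ← hup] at this
  exact pr_asymm hv this

theorem adj_iff {D : Set (Pref A)} (h2 : 2 ≤ Fintype.card A) {a b : A} :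
    (adjGraph D).Adj a b ↔ DomAdjacent D a b := by
  have hs : ∀ a b, DomAdjacent D a b → DomAdjacent D b a := by
    rintro a b ⟨P, hP, P', hP', h1, h2, h3, h4, h5⟩
    exact ⟨P', hP', P, hP, h3, h4, h1, h2, fun k hk => (h5 k hk).symm⟩
  have hne : DomAdjacent D a b → a ≠ b := by
    rintro ⟨P, hP, P', hP', h1, h2', h3, h4, h5⟩ rfl
    exact second_ne_peak h2 P (h2'.trans h1.symm)
  unfold adjGraph
  rw [SimpleGraph.fromRel_adj]
  constructor
  · rintro ⟨_, h | h⟩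
    · exact h
    · exact hs _ _ h
  · intro h; exact ⟨hne h, Or.inl h⟩

theorem minRich {D : Set (Pref A)} (h2 : 2 ≤ Fintype.card A) (hc : (adjGraph D).Connected) (a : A) :
    ∃ P ∈ D, peak P = a := by
  obtain ⟨b, hb⟩ : ∃ b, b ≠ a := by
    have : Nontrivial A := Fintype.one_lt_card_iff_nontrivial.1 h2
    exact exists_ne a
  obtain ⟨w⟩ := hc.preconnected a b
  cases w with
  | nil => exact absurd rfl hb
  | cons h p =>
    obtain ⟨P, hP, P', hP', h1, _⟩ := (adj_iff h2).1 h
    exact ⟨P, hP, h1⟩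

/-! ### Intervals in trees -/

section Tree
variable {T : SimpleGraph A}

theorem intv_comm (x y : A) : intv T x y = intv T y x := by
  ext z; simp only [intv, Set.mem_setOf_eq]
  rw [T.dist_comm (u := x) (v := z), T.dist_comm (u := z) (v := y), T.dist_comm (u := x) (v := y), add_comm]

theorem left_mem_intv (x y : A) : x ∈ intv T x y := by simp [intv]
theorem right_mem_intv (x y : A) : y ∈ intv T x y := by simp [intv]

theorem intv_self (hT : T.Connected) {x y : A} (h : y ∈ intv T x x) : y = x := by
  simp only [intv, Set.mem_setOf_eq, SimpleGraph.dist_self] at h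
  have : T.dist x y = 0 := by omega
  exact (hT.dist_eq_zero_iff.1 this).symm

theorem intv_antisymm (hT : T.Connected) {x y z : A} (h : y ∈ intv T x z) (h' : z ∈ intv T x y) :
    y = z := by
  simp only [intv, Set.mem_setOf_eq] at h h'
  rw [T.dist_comm (u := z) (v := y)] at h'
  have : T.dist y z = 0 := by omega
  exact hT.dist_eq_zero_iff.1 this

/-- if `z ∈ ⟨x,y⟩` and `w ∈ ⟨x,z⟩` then `w ∈ ⟨x,y⟩` -/
theorem intv_trans (hT : T.Connected) {x y z w : A} (h : z ∈ intv T x y) (h' : w ∈ intv T x z) :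
    w ∈ intv T x y := by
  simp only [intv, Set.mem_setOf_eq] at *
  have := hT.dist_triangle (u := w) (v := z) (w := y)
  have := hT.dist_triangle (u := x) (v := w) (w := y)
  omega

/-- if `z ∈ ⟨x,y⟩` and `w ∈ ⟨x,z⟩` then `z ∈ ⟨w,y⟩` -/
theorem intv_trans' (hT : T.Connected) {x y z w : A} (h : z ∈ intv T x y) (h' : w ∈ intv T x z) :
    z ∈ intv T w y := by
  simp only [intv, Set.mem_setOf_eq] at *
  have := hT.dist_triangle (u := w) (v := z) (w := y)
  have := hT.dist_triangle (u := x) (v := w) (w := y)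
  omega

theorem path_len (hT : T.IsTree) {x y : A} {w : T.Walk x y} (hw : w.IsPath) :
    w.length = T.dist x y := by
  obtain ⟨p, hp, hl⟩ := hT.connected.exists_path_of_dist x y
  have := hT.IsAcyclic.path_unique ⟨w, hw⟩ ⟨p, hp⟩
  have : w = p := congrArg Subtype.val this
  rw [this, hl]

theorem mem_intv_of_sep (hT : T.Connected) {x y z : A} (h : ∀ w : T.Walk x y, z ∈ w.support) :
    z ∈ intv T x y := by
  obtain ⟨p, hp, hl⟩ := hT.exists_path_of_dist x y
  have hz := h p
  have e := congrArg SimpleGraph.Walk.length (p.take_spec hz)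
  rw [SimpleGraph.Walk.length_append, hl] at e
  have h1 := T.dist_le (p.takeUntil z hz)
  have h2 := T.dist_le (p.dropUntil z hz)
  have := hT.dist_triangle (u := x) (v := z) (w := y)
  simp only [intv, Set.mem_setOf_eq]
  omega

theorem sep_of_mem_intv (hT : T.IsTree) {x y z : A} (h : z ∈ intv T x y) (w : T.Walk x y) :
    z ∈ w.support := by
  obtain ⟨p, hp⟩ := hT.connected.exists_walk_length_eq_dist x z
  obtain ⟨q, hq⟩ := hT.connected.exists_walk_length_eq_dist z y
  have hpq : (p.append q).IsPath := by
    apply SimpleGraph.Walk.isPath_of_length_eq_dist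
    rw [SimpleGraph.Walk.length_append, hp, hq]; exact h
  have := hT.IsAcyclic.path_unique ⟨w.bypass, w.bypass_isPath⟩ ⟨_, hpq⟩
  have e : w.bypass = p.append q := congrArg Subtype.val this
  apply w.support_bypass_subset_support
  rw [e, SimpleGraph.Walk.mem_support_append_iff]
  left; exact p.end_mem_support

theorem mem_intv_iff (hT : T.IsTree) {x y z : A} :
    z ∈ intv T x y ↔ ∀ w : T.Walk x y, z ∈ w.support :=
  ⟨fun h w => sep_of_mem_intv hT h w, mem_intv_of_sep hT.connected⟩

theorem intv_split (hT : T.IsTree) {x y z : A} (h : z ∈ intv T x y) (v : A) :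
    z ∈ intv T x v ∨ z ∈ intv T v y := by
  by_contra hcon
  push Not at hcon
  rw [mem_intv_iff hT, mem_intv_iff hT] at hcon
  push Not at hcon
  obtain ⟨⟨w, hw⟩, w', hw'⟩ := hcon
  have := sep_of_mem_intv hT h (w.append w')
  rw [SimpleGraph.Walk.mem_support_append_iff] at this
  tauto

theorem mem_intv_of_mem_path (hT : T.IsTree) {x y z : A} {w : T.Walk x y} (hw : w.IsPath)
    (hz : z ∈ w.support) : z ∈ intv T x y := by
  have e := congrArg SimpleGraph.Walk.length (w.take_spec hz)
  rw [SimpleGraph.Walk.length_append, path_len hT hw] at e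
  have h1 := T.dist_le (w.takeUntil z hz)
  have h2 := T.dist_le (w.dropUntil z hz)
  have := hT.connected.dist_triangle (u := x) (v := z) (w := y)
  simp only [intv, Set.mem_setOf_eq]
  omega

theorem intv_convex (hT : T.IsTree) {p x s b v : A} (hs : s ∈ intv T p x) (hb : b ∈ intv T p x)
    (hv : v ∈ intv T s b) : v ∈ intv T p x := by
  rcases intv_split hT hb s with h | h
  · have h1 : v ∈ intv T p s := by
      rw [intv_comm] at h ⊢; exact intv_trans hT.connected h hv
    exact intv_trans hT.connected hs h1
  · have h1 : v ∈ intv T s x := intv_trans hT.connected h hv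
    rw [intv_comm] at hs h1 ⊢
    exact intv_trans hT.connected hs h1

theorem proj_exists (hT : T.IsTree) (p x c : A) : ∃ s, IsProjPt T (intv T p x) c s := by
  obtain ⟨s, hs, hmin⟩ := Set.exists_min_image (intv T p x) (fun s => T.dist c s) (Set.toFinite _)
    ⟨p, left_mem_intv p x⟩
  refine ⟨s, hs, fun b hb => ?_⟩
  obtain ⟨q1, hq1, hl1⟩ := hT.connected.exists_path_of_dist c s
  obtain ⟨q2, hq2, hl2⟩ := hT.connected.exists_path_of_dist s b
  have hpath : (q1.append q2).IsPath := by
    rw [SimpleGraph.Walk.isPath_def, SimpleGraph.Walk.support_append, List.nodup_append']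
    refine ⟨hq1.support_nodup, hq2.support_nodup.tail, ?_⟩
    intro v hv1 hv2
    have hvb : v ∈ intv T p x :=
      intv_convex hT hs hb (mem_intv_of_mem_path hT hq2 (List.mem_of_mem_tail hv2))
    have hcv : v ∈ intv T c s := mem_intv_of_mem_path hT hq1 hv1
    have h1 := hmin v hvb
    simp only [intv, Set.mem_setOf_eq] at hcv
    have h0 : T.dist v s = 0 := by omega
    have : v = s := hT.connected.dist_eq_zero_iff.1 h0
    subst this
    have hnd := hq2.support_nodup
    rw [SimpleGraph.Walk.support_eq_cons] at hnd
    exact (List.nodup_cons.1 hnd).1 hv2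
  apply mem_intv_of_mem_path hT hpath
  rw [SimpleGraph.Walk.mem_support_append_iff]
  left; exact q1.end_mem_support

theorem projOn_eq (hT : T.Connected) {B : Set A} {c s : A} (h : IsProjPt T B c s) :
    projOn T B c = s := by
  have hex : ∃ a', IsProjPt T B c a' := ⟨s, h⟩
  unfold projOn
  rw [dif_pos hex]
  have h' := hex.choose_spec
  exact intv_antisymm hT (h'.2 _ h.1) (h.2 _ h'.1)

theorem projOn_spec (hT : T.IsTree) (p x c : A) :
    IsProjPt T (intv T p x) c (projOn T (intv T p x) c) := by
  obtain ⟨s, hs⟩ := proj_exists hT p x c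
  rw [projOn_eq hT.connected hs]; exact hs

/-- The compact form of semi-single-peakedness. -/
def SSP (T : SimpleGraph A) (xbar : A) (P : Pref A) : Prop :=
  ∀ s d : A, s ≠ d → s ∈ intv T (peak P) xbar → s ∈ intv T (peak P) d → prefers P s d

theorem semiSP_iff (hT : T.IsTree) {x : A} {P : Pref A} : SemiSP T x P ↔ SSP T x P := by
  constructor
  · rintro ⟨h1, h2⟩ s d hsd hs hs'
    by_cases hd : d ∈ intv T (peak P) x
    · exact h1 s d hs hd hsd hs'
    · have hpd := h2 d hd
      have hpr := projOn_spec hT (peak P) x d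
      set π := projOn T (intv T (peak P) x) d with hπ
      by_cases hsπ : s = π
      · rw [hsπ]; exact hpd
      · have hsp : s ∈ intv T (peak P) π := by
          rcases intv_split hT hs' π with h | h
          · exact h
          · exfalso
            have h' := hpr.2 s hs
            rw [intv_comm] at h
            exact hsπ (intv_antisymm hT.connected h h')
        exact pr_trans (h1 s π hs hpr.1 hsπ hsp) hpd
  · intro h
    refine ⟨fun c d hc hd hcd hcd' => h c d hcd hc hcd', fun c hc => ?_⟩
    have hpr := projOn_spec hT (peak P) x c
    apply h _ _ _ hpr.1
    · rw [intv_comm]; exact hpr.2 _ (left_mem_intv _ _)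
    · intro e; rw [e] at hpr; exact hc hpr.1

theorem adj_of_intv (hT : T.Connected) {x y : A} (hxy : x ≠ y)
    (h : ∀ s ∈ intv T x y, s = x ∨ s = y) : T.Adj x y := by
  obtain ⟨p, hp, hl⟩ := hT.exists_path_of_dist x y
  cases p with
  | nil => exact absurd rfl hxy
  | @cons _ v _ hadj q =>
    rw [SimpleGraph.Walk.length_cons] at hl
    have h1 : T.dist x v = 1 := SimpleGraph.dist_eq_one_iff_adj.2 hadj
    have h2 := T.dist_le q
    have h3 := hT.dist_triangle (u := x) (v := v) (w := y)
    have : v ∈ intv T x y := by simp only [intv, Set.mem_setOf_eq]; omega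
    rcases h v this with e | e
    · exact absurd e hadj.ne.symm
    · exact e ▸ hadj

theorem exists_next (hT : T.Connected) {x y : A} (hxy : x ≠ y) :
    ∃ v, T.Adj x v ∧ v ∈ intv T x y ∧ T.dist v y < T.dist x y := by
  obtain ⟨p, hp, hl⟩ := hT.exists_path_of_dist x y
  cases p with
  | nil => exact absurd rfl hxy
  | @cons _ v _ hadj q =>
    rw [SimpleGraph.Walk.length_cons] at hl
    have h1 : T.dist x v = 1 := SimpleGraph.dist_eq_one_iff_adj.2 hadj
    have h2 := T.dist_le q
    have h3 := hT.dist_triangle (u := x) (v := v) (w := y)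
    exact ⟨v, hadj, by simp only [intv, Set.mem_setOf_eq]; omega, by omega⟩

theorem mid_mem (hT : T.IsTree) {x y z : A} (hy : T.Adj y x) (hz : T.Adj x z) (hyz : y ≠ z) :
    x ∈ intv T y z := by
  have hp : (SimpleGraph.Walk.cons hy (SimpleGraph.Walk.cons hz SimpleGraph.Walk.nil)).IsPath := by
    simp [SimpleGraph.Walk.cons_isPath_iff, hy.ne, hz.ne, hyz]
  exact mem_intv_of_mem_path hT hp (by simp)

/-- A set whose only exit is `a` is left only through `a`. -/
theorem gate {X : Set A} {a : A} (haX : a ∈ X) (h : ∀ x ∈ X, x ≠ a → ∀ y, y ∉ X → ¬ T.Adj x y)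
    {x y : A} (w : T.Walk x y) (hx : x ∈ X) (hy : y ∉ X) : a ∈ w.support := by
  induction w with
  | nil => exact absurd hx hy
  | @cons u v t hadj q ih =>
    rw [SimpleGraph.Walk.support_cons, List.mem_cons]
    by_cases hu : u = a
    · left; exact hu.symm
    · right
      apply ih _ hy
      by_contra hv
      exact h u hx hu v hv hadj

def Gated (T : SimpleGraph A) (X : Set A) (a : A) : Prop :=
  a ∈ X ∧ ∀ x ∈ X, ∀ y, y ∉ X → a ∈ intv T x y

theorem Gated.closed (hT : T.Connected) {X : Set A} {a : A} (h : Gated T X a) {x y v : A} (hx : x ∈ X)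
    (hy : y ∈ X) (hv : v ∈ intv T x y) : v ∈ X := by
  by_contra hvX
  have h1 := h.2 x hx v hvX
  have h2 := h.2 y hy v hvX
  simp only [intv, Set.mem_setOf_eq] at *
  have h3 := hT.dist_triangle (u := x) (v := a) (w := y)
  rw [T.dist_comm (u := y) (v := a), T.dist_comm (u := y) (v := v)] at h2
  have : T.dist a v = 0 := by omega
  have := hT.dist_eq_zero_iff.1 this
  exact hvX (this ▸ h.1)

theorem iso_dist {G : SimpleGraph A} (hG : G.IsTree) (hT : T.IsTree) {X : Set A} {a : A}
    (hgG : Gated G X a) (hadj : ∀ x ∈ X, ∀ y ∈ X, G.Adj x y → T.Adj x y) {x y : A} (hx : x ∈ X)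
    (hy : y ∈ X) : G.dist x y = T.dist x y := by
  obtain ⟨p, hp, hl⟩ := hG.connected.exists_path_of_dist x y
  have hsup : ∀ v ∈ p.support, v ∈ X := fun v hv =>
    hgG.closed hG.connected hx hy (mem_intv_of_mem_path hG hp hv)
  have hed : ∀ e ∈ p.edges, e ∈ T.edgeSet := by
    intro e he
    induction e using Sym2.ind with
    | _ u v =>
      exact hadj u (hsup u (p.fst_mem_support_of_mem_edges he)) v
        (hsup v (p.snd_mem_support_of_mem_edges he)) (p.adj_of_mem_edges he)
  have h2 := path_len hT (hp.transfer hed)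
  rw [SimpleGraph.Walk.length_transfer] at h2
  rw [← hl, h2]

theorem iso_intv {G : SimpleGraph A} (hG : G.IsTree) (hT : T.IsTree) {X : Set A} {a : A}
    (hgG : Gated G X a) (hgT : Gated T X a) (hadj : ∀ x ∈ X, ∀ y ∈ X, G.Adj x y → T.Adj x y)
    {x y : A} (hx : x ∈ X) (hy : y ∈ X) : intv G x y = intv T x y := by
  ext z
  constructor
  · intro hz
    have hzX := hgG.closed hG.connected hx hy hz
    simp only [intv, Set.mem_setOf_eq] at *
    rw [← iso_dist hG hT hgG hadj hx hzX, ← iso_dist hG hT hgG hadj hzX hy,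
      ← iso_dist hG hT hgG hadj hx hy]; exact hz
  · intro hz
    have hzX := hgT.closed hT.connected hx hy hz
    simp only [intv, Set.mem_setOf_eq] at *
    rw [iso_dist hG hT hgG hadj hx hzX, iso_dist hG hT hgG hadj hzX hy,
      iso_dist hG hT hgG hadj hx hy]; exact hz

/-- transfer of `SSP` along a common gated part -/
theorem ssp_transfer {G : SimpleGraph A} (hG : G.IsTree) (hT : T.IsTree) {X : Set A} {a : A}
    (hgG : Gated G X a) (hgT : Gated T X a)
    (hI : ∀ x ∈ X, ∀ y ∈ X, intv G x y = intv T x y)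
    {P : Pref A} (hp : peak P ∈ X) (h : SSP G a P) : SSP T a P := by
  intro s d hsd hs hs'
  have ha := hgG.1
  rw [← hI _ hp _ ha] at hs
  have hsX := hgG.closed hG.connected hp ha hs
  by_cases hd : d ∈ X
  · rw [← hI _ hp _ hd] at hs'
    exact h s d hsd hs hs'
  · exact h s d hsd hs (intv_trans hG.connected (hgG.2 _ hp _ hd) hs)

theorem ssp_sub (hT : T.IsTree) {x y : A} {P : Pref A} (h : SSP T x P) (hy : y ∈ intv T (peak P) x) :
    SSP T y P :=
  fun s d hsd hs hs' => h s d hsd (intv_trans hT.connected hy hs) hs'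

end Tree


/-! ### Unidimensional domains without unique seconds are dictatorial -/

section Dict

structure SP2 (D : Set (Pref A)) (g : Pref A → Pref A → A) : Prop where
  U : ∀ P ∈ D, ∀ Q ∈ D, peak P = peak Q → g P Q = peak P
  S1 : ∀ P ∈ D, ∀ P' ∈ D, ∀ Q ∈ D, g P Q = g P' Q ∨ prefers P (g P Q) (g P' Q)
  S2 : ∀ P ∈ D, ∀ Q ∈ D, ∀ Q' ∈ D, g P Q = g P Q' ∨ prefers Q (g P Q) (g P Q')

theorem SP2.swap {D : Set (Pref A)} {g : Pref A → Pref A → A} (h : SP2 D g) :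
    SP2 D (fun P Q => g Q P) where
  U := fun P hP Q hQ e => by rw [h.U Q hQ P hP e.symm, e]
  S1 := fun P hP P' hP' Q hQ => h.S2 Q hQ P hP P' hP'
  S2 := fun P hP Q hQ Q' hQ' => h.S1 Q hQ Q' hQ' P hP

def Win1 (D : Set (Pref A)) (g : Pref A → Pref A → A) (a b : A) : Prop :=
  ∀ P ∈ D, peak P = a → ∀ Q ∈ D, peak Q = b → g P Q = a

def Mut (D : Set (Pref A)) (a b : A) : Prop := b ∈ secondsSet D a ∧ a ∈ secondsSet D b

theorem Mut.symm {D : Set (Pref A)} {a b : A} (h : Mut D a b) : Mut D b a := ⟨h.2, h.1⟩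

theorem mut_of_adj {D : Set (Pref A)} (h2 : 2 ≤ Fintype.card A) {a b : A}
    (h : (adjGraph D).Adj a b) : Mut D a b := by
  obtain ⟨P, hP, P', hP', h1, h2, h3, h4, h5⟩ := (adj_iff h2).1 h
  exact ⟨⟨P, hP, h1, h2⟩, ⟨P', hP', h3, h4⟩⟩

theorem Mut.ne {D : Set (Pref A)} (h2 : 2 ≤ Fintype.card A) {a b : A} (h : Mut D a b) : a ≠ b := by
  obtain ⟨⟨P, hP, e1, e2⟩, _⟩ := h
  rintro rfl
  exact second_ne_peak h2 P (e2.trans e1.symm)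

variable {D : Set (Pref A)} {g : Pref A → Pref A → A}

theorem win1_of (h2 : 2 ≤ Fintype.card A) (hg : SP2 D g) {a b : A} {P0 Q0 : Pref A}
    (hP0 : P0 ∈ D) (hQ0 : Q0 ∈ D) (e1 : peak P0 = a) (e2 : second P0 = b) (e3 : peak Q0 = b)
    (h : g P0 Q0 = a) : Win1 D g a b := by
  have hab : a ≠ b := by rw [← e1, ← e2]; exact (second_ne_peak h2 P0).symm
  intro P hP eP Q hQ eQ
  have h1 : g P0 Q = a := by
    have hu := hg.U Q0 hQ0 Q hQ (e3.trans eQ.symm)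
    have hne : g P0 Q ≠ b := by
      intro hb
      rcases hg.S2 P0 hP0 Q0 hQ0 Q hQ with h' | h'
      · exact hab (by rw [← h, h', hb])
      · rw [hb, ← e3] at h'; exact not_pr_peak h'
    rcases hg.S1 P0 hP0 Q0 hQ0 Q hQ with h' | h'
    · rw [hu, e3] at h'; exact absurd h' hne
    · rw [hu, e3, ← e2] at h'
      rw [eq_peak_of_pr_second h2 h', e1]
  rcases hg.S1 P hP P0 hP0 Q hQ with h' | h'
  · rw [h', h1]
  · rw [h1, ← eP] at h'; exact absurd h' not_pr_peak

theorem win_or (h2 : 2 ≤ Fintype.card A) (hg : SP2 D g) {a b : A} (h : Mut D a b) :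
    Win1 D g a b ∨ Win1 D (fun P Q => g Q P) b a := by
  obtain ⟨⟨P0, hP0, e1, e2⟩, ⟨Q0, hQ0, e3, e4⟩⟩ := h
  by_cases hc : g P0 Q0 = a
  · left; exact win1_of h2 hg hP0 hQ0 e1 e2 e3 hc
  · right
    apply win1_of h2 hg.swap hQ0 hP0 e3 e4 e1
    rcases hg.S1 P0 hP0 Q0 hQ0 Q0 hQ0 with h' | h'
    · rw [hg.U Q0 hQ0 Q0 hQ0 rfl, e3] at h'; exact h'
    · rw [hg.U Q0 hQ0 Q0 hQ0 rfl, e3, ← e2] at h'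
      exact absurd ((eq_peak_of_pr_second h2 h').trans e1) hc

theorem prop1 (h2 : 2 ≤ Fintype.card A) (hg : SP2 D g) {a b c : A} (hab : Mut D a b)
    (hbc : (adjGraph D).Adj b c) (hac : a ≠ c) (hw : Win1 D g a b) : Win1 D g b c := by
  rcases win_or h2 hg (mut_of_adj h2 hbc) with h | h
  · exact h
  · exfalso
    have hne := hab.ne h2
    obtain ⟨⟨P, hP, e1, e2⟩, ⟨P1, hP1, e3, e4⟩⟩ := hab
    obtain ⟨Q, hQ, Q', hQ', q1, q2, q3, q4, q5⟩ := (adj_iff h2).1 hbc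
    have hv : g P Q' = a := by
      have hgq := hw P hP e1 Q hQ q1
      by_contra hva
      rcases hg.S2 P hP Q hQ Q' hQ' with h' | h'
      · exact hva (h'.symm.trans hgq)
      · rcases hg.S2 P hP Q' hQ' Q hQ with h'' | h''
        · exact hva (h''.trans hgq)
        · have := (swap_lemma h2 (q3.trans q2.symm) (q4.trans q1.symm) q5 h' h'').1
          rw [hgq, q1] at this; exact hne this
    have hc : g P1 Q' = c := h Q' hQ' q3 P1 hP1 e3
    rcases hg.S1 P1 hP1 P hP Q' hQ' with h' | h'
    · rw [hc, hv] at h'; exact hac h'.symm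
    · rw [hc, hv, ← e4] at h'
      have := eq_peak_of_pr_second h2 h'
      rw [e3] at this
      exact hbc.ne this.symm

theorem prop2 (h2 : 2 ≤ Fintype.card A) (hg : SP2 D g) {a b c : A}
    (hab : (adjGraph D).Adj a b) (hbc : Mut D b c) (hac : a ≠ c) (hw : Win1 D g a b) :
    Win1 D g b c := by
  rcases win_or h2 hg hbc with h | h
  · exact h
  · exfalso
    have := prop1 h2 hg.swap hbc.symm hab.symm hac.symm h
    obtain ⟨⟨P, hP, e1, e2⟩, ⟨P1, hP1, e3, e4⟩⟩ := mut_of_adj h2 hab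
    have h1 := hw P hP e1 P1 hP1 e3
    have h2 := this P1 hP1 e3 P hP e1
    exact hab.ne (h1.symm.trans h2)

theorem chain (h2 : 2 ≤ Fintype.card A) (hg : SP2 D g) {a b y : A} (hab : Mut D a b)
    (hw : Win1 D g a b) (hw' : Win1 D g b y) : Win1 D g a y := by
  have hne := hab.ne h2
  obtain ⟨⟨P0, hP0, e1, e2⟩, ⟨Q1, hQ1, e3, e4⟩⟩ := hab
  intro P hP eP Q hQ eQ
  have h1 : g P0 Q = a := by
    have hu : g Q1 Q = b := hw' Q1 hQ1 e3 Q hQ eQ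
    have hnb : g P0 Q ≠ b := by
      intro hb
      have ha := hw P0 hP0 e1 Q1 hQ1 e3
      rcases hg.S2 P0 hP0 Q1 hQ1 Q hQ with h' | h'
      · rw [ha, hb] at h'; exact hne h'
      · rw [ha, hb, ← e3] at h'; exact not_pr_peak h'
    rcases hg.S1 P0 hP0 Q1 hQ1 Q hQ with h' | h'
    · rw [hu] at h'; exact absurd h' hnb
    · rw [hu, ← e2] at h'
      rw [eq_peak_of_pr_second h2 h', e1]
  rcases hg.S1 P hP P0 hP0 Q hQ with h' | h'
  · rw [h', h1]
  · rw [h1, ← eP] at h'; exact absurd h' not_pr_peak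

theorem win_self (hg : SP2 D g) (a : A) : Win1 D g a a := fun P hP e Q hQ e' => by
  rw [hg.U P hP Q hQ (e.trans e'.symm), e]

theorem path_win (h2 : 2 ≤ Fintype.card A) (hg : SP2 D g) {z t : A} (w : (adjGraph D).Walk z t) :
    ∀ u : A, w.IsPath → u ∉ w.support → Mut D u z → Win1 D g u z → Win1 D g z t := by
  induction w with
  | nil => intro u _ _ _ _; exact win_self hg _
  | @cons z z' t hadj q ih =>
    intro u hp hu hm hw
    rw [SimpleGraph.Walk.cons_isPath_iff] at hp
    rw [SimpleGraph.Walk.support_cons, List.mem_cons, not_or] at hu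
    have hz' : u ≠ z' := by rintro rfl; exact hu.2 q.start_mem_support
    have h1 := prop1 h2 hg hm hadj hz' hw
    exact chain h2 hg (mut_of_adj h2 hadj) h1 (ih z hp.1 hp.2 (mut_of_adj h2 hadj) h1)

theorem return_win (h2 : 2 ≤ Fintype.card A) (hg : SP2 D g) {e' e z : A}
    (ha : (adjGraph D).Adj e' e) (hw : Win1 D g e' e) (hz : Mut D z e) (hze : z ≠ e')
    (w : (adjGraph D).Walk z e') (he : e ∉ w.support) : Win1 D g e e' := by
  have h1 := prop2 h2 hg ha hz.symm hze.symm hw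
  have h3 := path_win h2 hg w.bypass e w.bypass_isPath
    (fun h => he (w.support_bypass_subset_support h)) hz.symm h1
  exact chain h2 hg hz.symm h1 h3

def reachAvoid (G : SimpleGraph A) (a b : A) : Set A := {v | ∃ w : G.Walk b v, a ∉ w.support}

theorem no_bad (h2 : 2 ≤ Fintype.card A) (hg : SP2 D g) (hc : (adjGraph D).Connected)
    (hl : LeafSymmetry D)
    (hs : ∀ x, ∃ u ∈ secondsSet D x, ∃ v ∈ secondsSet D x, u ≠ v) (n : ℕ) :
    ∀ a b : A, (adjGraph D).Adj a b → (reachAvoid (adjGraph D) a b).ncard = n →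
      Win1 D g a b → Win1 D g b a := by
  induction n using Nat.strong_induction_on with
  | _ n ih =>
    intro a b hab hn hw
    by_contra hbad
    by_cases hc' : ∃ c, (adjGraph D).Adj b c ∧ c ≠ a
    · obtain ⟨c, hbc, hca⟩ := hc'
      by_cases hret : ∃ w : (adjGraph D).Walk c a, b ∉ w.support
      · obtain ⟨w, hw'⟩ := hret
        exact hbad (return_win h2 hg hab hw (mut_of_adj h2 hbc.symm) hca w hw')
      · have h1 : Win1 D g b c := prop1 h2 hg (mut_of_adj h2 hab) hbc hca.symm hw
        have h3 : Win1 D g c b := by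
          refine ih _ ?_ b c hbc rfl h1
          rw [← hn]
          apply Set.ncard_lt_ncard _ (Set.toFinite _)
          refine ⟨?_, ?_⟩
          · rintro v ⟨w, hwv⟩
            refine ⟨SimpleGraph.Walk.cons hbc w, ?_⟩
            rw [SimpleGraph.Walk.support_cons, List.mem_cons, not_or]
            refine ⟨hab.ne, fun ha => hret ⟨w.takeUntil a ha, fun hb => ?_⟩⟩
            exact hwv (w.support_takeUntil_subset_support ha hb)
          · intro hsub
            have : b ∈ reachAvoid (adjGraph D) b c := hsub ⟨SimpleGraph.Walk.nil, by simp [hab.ne]⟩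
            obtain ⟨w, hwv⟩ := this
            exact hwv w.end_mem_support
        exact hbad (prop1 h2 hg (mut_of_adj h2 hbc.symm) hab.symm hca h3)
    · push Not at hc'
      obtain ⟨z, hz1, hz2, hz3⟩ := hl b ⟨a, hab.symm, fun y hy => hc' y hy⟩ (hs b)
      have hm : Mut D z b := ⟨hz3, hz1⟩
      have hza : z ≠ a := by rintro rfl; exact hz2 hab.symm
      obtain ⟨w, hwp⟩ := (hc.preconnected b z).exists_isPath
      cases w with
      | nil => exact hm.ne h2 rfl
      | @cons _ v _ hadj q =>
        obtain rfl := hc' v hadj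
        rw [SimpleGraph.Walk.cons_isPath_iff] at hwp
        exact hbad (return_win h2 hg hab hw hm hza q.reverse (by
          rw [SimpleGraph.Walk.support_reverse, List.mem_reverse]; exact hwp.2))

theorem dict1_of (h2 : 2 ≤ Fintype.card A) (hg : SP2 D g) (hc : (adjGraph D).Connected)
    (hl : LeafSymmetry D)
    (hs : ∀ x, ∃ u ∈ secondsSet D x, ∃ v ∈ secondsSet D x, u ≠ v) {a b : A}
    (hab : (adjGraph D).Adj a b) (hw : Win1 D g a b) : ∀ P ∈ D, ∀ Q ∈ D, g P Q = peak P := by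
  have nb := fun x y hxy h => no_bad h2 hg hc hl hs _ x y hxy rfl h
  have good : ∀ x y (w : (adjGraph D).Walk x y), (∀ z, (adjGraph D).Adj x z → Win1 D g x z) →
      (∀ z, (adjGraph D).Adj y z → Win1 D g y z) := by
    intro x y w
    induction w with
    | nil => exact id
    | @cons x x' y hadj q ih =>
      intro h
      apply ih
      intro z hz
      by_cases hzx : z = x
      · subst hzx; exact nb _ _ hadj (h _ hadj)
      · exact prop1 h2 hg (mut_of_adj h2 hadj) hz (Ne.symm hzx) (h _ hadj)
  have hb : ∀ z, (adjGraph D).Adj b z → Win1 D g b z := by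
    intro z hz
    by_cases hzx : z = a
    · subst hzx; exact nb _ _ hab hw
    · exact prop1 h2 hg (mut_of_adj h2 hab) hz (Ne.symm hzx) hw
  have hall : ∀ x z, (adjGraph D).Adj x z → Win1 D g x z := by
    intro x
    obtain ⟨w⟩ := hc.preconnected b x
    exact good b x w hb
  have hww : ∀ x y (w : (adjGraph D).Walk x y), Win1 D g x y := by
    intro x y w
    induction w with
    | nil => exact win_self hg _
    | cons hadj q ih => exact chain h2 hg (mut_of_adj h2 hadj) (hall _ _ hadj) ih
  intro P hP Q hQ
  obtain ⟨w⟩ := hc.preconnected (peak P) (peak Q)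
  exact hww _ _ w P hP rfl Q hQ rfl

theorem two_dict (h2 : 2 ≤ Fintype.card A) (hc : (adjGraph D).Connected)
    (hl : LeafSymmetry D)
    (hs : ∀ x, ∃ u ∈ secondsSet D x, ∃ v ∈ secondsSet D x, u ≠ v) (hg : SP2 D g) :
    (∀ P ∈ D, ∀ Q ∈ D, g P Q = peak P) ∨ (∀ P ∈ D, ∀ Q ∈ D, g P Q = peak Q) := by
  obtain ⟨a, b, hne⟩ := (Fintype.one_lt_card_iff_nontrivial.1 h2).exists_pair_ne
  obtain ⟨b, hab, _⟩ := exists_next hc hne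
  rcases win_or h2 hg (mut_of_adj h2 hab) with h | h
  · left; exact dict1_of h2 hg hc hl hs hab h
  · right; intro P hP Q hQ
    exact dict1_of h2 hg.swap hc hl hs hab.symm h Q hQ P hP

theorem upd_zero {n : ℕ} (P Q : Pref A) (R : Fin n → Pref A) :
    Function.update (Fin.cons P R : Fin (n+1) → Pref A) 0 Q = Fin.cons Q R :=
  Fin.update_cons_zero _ _ _

theorem upd_succ {n : ℕ} (P Q : Pref A) (R : Fin n → Pref A) (i : Fin n) :
    Function.update (Fin.cons P R : Fin (n+1) → Pref A) i.succ Q = Fin.cons P (Function.update R i Q) :=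
  (Fin.cons_update _ _ _ _).symm

theorem inDom_cons {n : ℕ} {P : Pref A} {R : Fin n → Pref A} (hP : P ∈ D) (hR : InDom D R) :
    InDom D (Fin.cons P R : Fin (n+1) → Pref A) := by
  intro i; refine Fin.cases ?_ (fun j => ?_) i
  · simpa using hP
  · simpa using hR j

theorem inDom_upd {n : ℕ} {Q : Pref A} {R : Fin n → Pref A} (hQ : Q ∈ D) (hR : InDom D R) (j : Fin n) :
    InDom D (Function.update R j Q) := by
  intro i
  by_cases h : i = j
  · subst h; simpa using hQ
  · rw [Function.update_of_ne h]; exact hR i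

theorem sp_cons0 {n : ℕ} {f : (Fin (n+1) → Pref A) → A} (hf : StrategyProof D f) {P Q : Pref A}
    {R : Fin n → Pref A} (hP : P ∈ D) (hQ : Q ∈ D) (hR : InDom D R) :
    f (Fin.cons P R) = f (Fin.cons Q R) ∨ prefers P (f (Fin.cons P R)) (f (Fin.cons Q R)) := by
  have := hf (Fin.cons P R) (inDom_cons hP hR) 0 Q hQ
  rw [upd_zero] at this
  simpa using this

theorem sp_consS {n : ℕ} {f : (Fin (n+1) → Pref A) → A} (hf : StrategyProof D f) {P Q : Pref A}
    {R : Fin n → Pref A} (hP : P ∈ D) (hQ : Q ∈ D) (hR : InDom D R) (i : Fin n) :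
    f (Fin.cons P R) = f (Fin.cons P (Function.update R i Q)) ∨
      prefers (R i) (f (Fin.cons P R)) (f (Fin.cons P (Function.update R i Q))) := by
  have := hf (Fin.cons P R) (inDom_cons hP hR) i.succ Q hQ
  rw [upd_succ] at this
  simpa using this

theorem dict_all (hcard : 2 ≤ Fintype.card A) (hr : ∀ a, ∃ P ∈ D, peak P = a)
    (two : ∀ g : Pref A → Pref A → A, SP2 D g →
      (∀ P ∈ D, ∀ Q ∈ D, g P Q = peak P) ∨ (∀ P ∈ D, ∀ Q ∈ D, g P Q = peak Q)) (k : ℕ) :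
    ∀ f : (Fin (k+2) → Pref A) → A, IsRule D f → StrategyProof D f → Dictatorship D f := by
  have tr : ∀ {P : Pref A} {x y z : A}, (x = y ∨ prefers P x y) → (y = z ∨ prefers P y z) →
      (x = z ∨ prefers P x z) := by
    rintro P x y z (rfl | h) (rfl | h')
    · left; rfl
    · right; exact h'
    · right; exact h
    · right; exact pr_trans h h'
  have anti : ∀ {P : Pref A} {x y : A}, (x = y ∨ prefers P x y) → (y = x ∨ prefers P y x) → x = y := by
    rintro P x y (rfl | h) (h' | h')
    · rfl
    · rfl
    · exact h'.symm
    · exact absurd h' (pr_asymm h)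
  induction k with
  | zero =>
    intro f hU hS
    have e : ∀ S : Fin 2 → Pref A, S = Fin.cons (S 0) (Fin.cons (S 1) Fin.elim0) := by
      intro S; funext i; fin_cases i <;> rfl
    have hE : InDom D (Fin.elim0 : Fin 0 → Pref A) := fun i => i.elim0
    have h := two (fun P Q => f (Fin.cons P (Fin.cons Q Fin.elim0))) ⟨?_, ?_, ?_⟩
    · rcases h with h | h
      · exact ⟨0, fun S hS' _ => by rw [e S]; exact h _ (hS' 0) _ (hS' 1)⟩
      · exact ⟨1, fun S hS' _ => by rw [e S]; exact h _ (hS' 0) _ (hS' 1)⟩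
    · intro P hP Q hQ hpq
      apply hU _ (inDom_cons hP (inDom_cons hQ hE))
      intro i; fin_cases i
      · rfl
      · exact hpq.symm
    · intro P hP P' hP' Q hQ
      exact sp_cons0 hS hP hP' (inDom_cons hQ hE)
    · intro P hP Q hQ Q' hQ'
      have := sp_consS hS hP hQ' (inDom_cons hQ hE) 0
      rwa [upd_zero] at this
  | succ k ih =>
    intro f hU hS
    have e : ∀ S : Fin (k+1+2) → Pref A,
        S = Fin.cons (S 0) (Fin.cons (S 1) (fun i => S i.succ.succ)) := by
      intro S; funext i
      refine Fin.cases rfl (fun j => ?_) i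
      refine Fin.cases rfl (fun l => ?_) j
      rfl
    have hI : IsRule D (fun S : Fin (k+2) → Pref A => f (Fin.cons (S 0) S)) := by
      intro S hS' a ha
      apply hU _ (inDom_cons (hS' 0) hS')
      intro i; refine Fin.cases ?_ (fun j => ?_) i
      · exact ha 0
      · exact ha j
    have hII : StrategyProof D (fun S : Fin (k+2) → Pref A => f (Fin.cons (S 0) S)) := by
      intro S hS' i Q hQ
      by_cases hi : i = 0
      · subst hi
        simp only [Function.update_self]
        refine tr (sp_cons0 hS (hS' 0) hQ hS') (sp_consS hS hQ hQ hS' 0)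
      · simp only [Function.update_of_ne (Ne.symm hi)]
        exact sp_consS hS (hS' 0) hQ hS' i
    obtain ⟨j, hj⟩ := ih _ hI hII
    · have hd : ∀ P ∈ D, ∀ R : Fin (k+1) → Pref A, InDom D R →
          f (Fin.cons P (Fin.cons P R)) = peak ((Fin.cons P R : Fin (k+2) → Pref A) j) := by
        intro P hP R hR
        exact hj (Fin.cons P R) (inDom_cons hP hR) (fun _ => trivial)
      revert hd
      refine Fin.cases ?_ (fun l => ?_) j
      · intro hd
        simp only [Fin.cons_zero] at hd
        have hg : ∀ R : Fin (k+1) → Pref A, InDom D R →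
            SP2 D (fun P Q => f (Fin.cons P (Fin.cons Q R))) := by
          intro R hR
          have S1 : ∀ P ∈ D, ∀ P' ∈ D, ∀ Q ∈ D, f (Fin.cons P (Fin.cons Q R)) = f (Fin.cons P' (Fin.cons Q R)) ∨ prefers P (f (Fin.cons P (Fin.cons Q R))) (f (Fin.cons P' (Fin.cons Q R))) := 
            fun P hP P' hP' Q hQ => sp_cons0 hS hP hP' (inDom_cons hQ hR)
          refine ⟨?_, S1, ?_⟩
          · intro P hP Q hQ hpq
            have h1 := S1 P hP Q hQ Q hQ
            rw [hd Q hQ R hR, ← hpq] at h1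
            rcases h1 with h | h
            · exact h
            · exact absurd h not_pr_peak
          · intro P hP Q hQ Q' hQ'
            have := sp_consS hS hP hQ' (inDom_cons hQ hR) 0
            rwa [upd_zero] at this
        have E := fun R hR => two _ (hg R hR)
        have step : ∀ R : Fin (k+1) → Pref A, InDom D R → ∀ j, ∀ Q ∈ D,
            (∀ P ∈ D, ∀ P' ∈ D, f (Fin.cons P (Fin.cons P' R)) = peak P) →
            (∀ P ∈ D, ∀ P' ∈ D, f (Fin.cons P (Fin.cons P' (Function.update R j Q))) = peak P) := by
          intro R hR j Q hQ h1
          rcases E _ (inDom_upd hQ hR j) with h | h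
          · exact h
          · exfalso
            obtain ⟨Pa, hPa, ea⟩ := hr (second (R j))
            obtain ⟨Pb, hPb, eb⟩ := hr (peak (R j))
            have h3 := sp_consS hS hPa hQ (inDom_cons hPb hR) j.succ
            rw [upd_succ, h1 Pa hPa Pb hPb, ea] at h3
            have h4 := h Pa hPa Pb hPb
            rw [h4, eb] at h3
            rcases h3 with h3 | h3
            · exact second_ne_peak hcard _ h3
            · simp only [Fin.cons_succ] at h3
              exact not_pr_peak h3
        have all : ∀ R R' : Fin (k+1) → Pref A, InDom D R → InDom D R' →
            (∀ P ∈ D, ∀ P' ∈ D, f (Fin.cons P (Fin.cons P' R)) = peak P) →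
            (∀ P ∈ D, ∀ P' ∈ D, f (Fin.cons P (Fin.cons P' R')) = peak P) := by
          intro R R' hR hR' h
          have : ∀ s : Finset (Fin (k+1)), InDom D (s.piecewise R' R) ∧ 
              (∀ P ∈ D, ∀ P' ∈ D, f (Fin.cons P (Fin.cons P' (s.piecewise R' R))) = peak P) := by
            intro s
            induction s using Finset.induction_on with
            | empty => simpa using ⟨hR, h⟩
            | insert j s hj ih =>
              rw [Finset.piecewise_insert]
              exact ⟨inDom_upd (hR' j) ih.1 j, step _ ih.1 j _ (hR' j) ih.2⟩
          have := (this Finset.univ).2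
          rwa [Finset.piecewise_univ] at this
        by_cases hex : ∃ R : Fin (k+1) → Pref A, InDom D R ∧ 
            (∀ P ∈ D, ∀ P' ∈ D, f (Fin.cons P (Fin.cons P' R)) = peak P)
        · obtain ⟨R, hR, h⟩ := hex
          refine ⟨0, fun S hS' _ => ?_⟩
          conv_lhs => rw [e S]
          exact all R _ hR (fun i => hS' _) h _ (hS' 0) _ (hS' 1)
        · refine ⟨1, fun S hS' _ => ?_⟩
          conv_lhs => rw [e S]
          rcases E (fun i => S i.succ.succ) (fun i => hS' _) with h | h
          · exact absurd ⟨_, fun i => hS' _, h⟩ hex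
          · exact h _ (hS' 0) _ (hS' 1)
      · intro hd
        simp only [Fin.cons_succ] at hd
        refine ⟨l.succ.succ, fun S hS' _ => ?_⟩
        conv_lhs => rw [e S]
        have hR : InDom D (fun i => S i.succ.succ) := fun i => hS' _
        have h0 := hS' 0
        have h1 := hS' 1
        generalize S 0 = P at *
        generalize S 1 = Q at *
        change _ = peak ((fun i : Fin (k+1) => S i.succ.succ) l)
        generalize (fun i : Fin (k+1) => S i.succ.succ) = R at *
        have a1 := sp_consS hS h0 h1 (inDom_cons h0 hR) 0
        rw [upd_zero, hd P h0 R hR] at a1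
        simp only [Fin.cons_zero] at a1
        have a2 := sp_cons0 hS h0 h1 (inDom_cons h1 hR)
        rw [hd Q h1 R hR] at a2
        exact anti a2 a1

theorem part_E (h2 : 2 ≤ Fintype.card A) (hc : (adjGraph D).Connected)
    (hl : LeafSymmetry D) (hu : ¬ UniqueSeconds D) : DictatorialDomain D := by
  have hr := fun a => minRich h2 hc a
  have hs : ∀ x, ∃ u ∈ secondsSet D x, ∃ v ∈ secondsSet D x, u ≠ v := by
    intro x
    by_contra hcon
    push Not at hcon
    obtain ⟨P, hP, e⟩ := hr x
    apply hu
    refine ⟨x, second P, Set.eq_singleton_iff_unique_mem.2 ⟨⟨P, hP, e, rfl⟩, fun y hy => ?_⟩⟩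
    exact hcon _ hy _ ⟨P, hP, e, rfl⟩
  intro n hn f hU hS
  obtain ⟨k, rfl⟩ : ∃ k, n = k + 2 := ⟨n - 2, by omega⟩
  exact dict_all h2 hr (fun g hg => two_dict h2 hc hl hs hg) k f hU hS

end Dict


/-! ### Medians; the projection rule -/

section Med
variable {T : SimpleGraph A}

theorem median_proj (hT : T.IsTree) {p x c m : A} (h1 : m ∈ intv T p x) (h2 : m ∈ intv T c p)
    (h3 : m ∈ intv T c x) : IsProjPt T (intv T p x) c m := by
  refine ⟨h1, fun b hb => ?_⟩
  rcases intv_split hT h2 b with h | h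
  · exact h
  rcases intv_split hT h3 b with h' | h'
  · exact h'
  have : m = b := by
    have e1 := hT.connected.dist_triangle (u := p) (v := m) (w := x)
    simp only [intv, Set.mem_setOf_eq] at *
    rw [T.dist_comm (u := b) (v := m)] at h h'
    rw [T.dist_comm (u := b) (v := p), T.dist_comm (u := m) (v := p)] at h
    have : T.dist m b = 0 := by omega
    exact hT.connected.dist_eq_zero_iff.1 this
  rw [this]; exact right_mem_intv _ _

theorem med_comm (hT : T.IsTree) (p q x : A) :
    projOn T (intv T p x) q = projOn T (intv T q x) p := by
  apply (projOn_eq hT.connected _).symm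
  have h := projOn_spec hT p x q
  apply median_proj hT
  · exact h.2 _ (right_mem_intv _ _)
  · rw [intv_comm]; exact h.2 _ (left_mem_intv _ _)
  · exact h.1

theorem part_B (hT : T.IsTree) {D : Set (Pref A)} {x : A} (h : ∀ P ∈ D, SSP T x P) (Pl Pu : Pref A) :
    ∃ f : (Fin 2 → Pref A) → A,
        IsRule D f ∧ TopsOnly D f ∧ StrategyProof D f ∧ f ![Pl, Pu] = f ![Pu, Pl] := by
  have key : ∀ P ∈ D, ∀ q c : A, projOn T (intv T q x) (peak P) = projOn T (intv T q x) c ∨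
      prefers P (projOn T (intv T q x) (peak P)) (projOn T (intv T q x) c) := by
    intro P hP q c
    have h1 := projOn_spec hT q x (peak P)
    have h2 := projOn_spec hT q x c
    by_cases e : projOn T (intv T q x) (peak P) = projOn T (intv T q x) c
    · left; exact e
    · right
      exact h P hP _ _ e (h1.2 _ (right_mem_intv _ _)) (h1.2 _ h2.1)
  refine ⟨fun P => projOn T (intv T (peak (P 1)) x) (peak (P 0)), ?_, ?_, ?_, ?_⟩
  · intro P hP a ha
    simp only [ha]
    have := projOn_spec hT a x a
    exact intv_self hT.connected (this.2 _ (left_mem_intv _ _))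
  · intro P P' hP hP' e
    simp only [e]
  · intro P hP i Q hQ
    fin_cases i
    · simpa using key (P 0) (hP 0) (peak (P 1)) (peak Q)
    · have := key (P 1) (hP 1) (peak (P 0)) (peak Q)
      rw [med_comm hT, med_comm hT _ (peak Q)] at this
      simpa using this
  · simp [med_comm hT (peak Pl)]

end Med

/-! ### Invariant rules force a tree and semi-single-peakedness -/

section Inv

def Retr (G : SimpleGraph A) (φ : A → A) : Prop :=
  ∀ x y, G.Adj x y → φ x = φ y ∨ (φ x = x ∧ φ y = y)

theorem Retr.walk {G : SimpleGraph A} {φ : A → A} (h : Retr G φ) {a s : A} (w : G.Walk a s)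
    (hs : φ s = s) : φ a ∈ w.support := by
  induction w with
  | nil => rw [hs]; simp
  | @cons a v s hadj q ih =>
    rw [SimpleGraph.Walk.support_cons, List.mem_cons]
    rcases h _ _ hadj with e | e
    · right; rw [e]; exact ih hs
    · left; exact e.1

theorem Retr.intv {G : SimpleGraph A} (hG : G.Connected) {φ : A → A} (h : Retr G φ) {a s : A}
    (hs : φ s = s) : φ a ∈ intv G a s :=
  mem_intv_of_sep hG (fun w => h.walk w hs)

theorem Retr.cyc {G : SimpleGraph A} {φ : A → A} (h : Retr G φ) {n : ℕ} {v : ℕ → A}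
    (hn : 3 ≤ n) (hper : ∀ i, v (i + n) = v i) (hadj : ∀ i, G.Adj (v i) (v (i+1)))
    (hinj : ∀ i j, i < j → j < i + n → v i ≠ v j) :
    (∀ i, φ (v i) = v i) ∨ (∀ i j, φ (v i) = φ (v j)) := by
  by_cases hc : ∀ i, φ (v i) = φ (v (i+1))
  · right
    have : ∀ i, φ (v i) = φ (v 0) := by
      intro i
      induction i with
      | zero => rfl
      | succ i ih => rw [← hc i, ih]
    intro i j; rw [this, this j]
  · left
    push Not at hc
    obtain ⟨i, hi⟩ := hc
    obtain ⟨h1, h2⟩ := (h _ _ (hadj i)).resolve_left hi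
    have fwd : ∀ k, ∃ l, l ≤ k ∧ φ (v (i+1+k)) = v (i+1+l) := by
      intro k
      induction k with
      | zero => exact ⟨0, le_refl _, h2⟩
      | succ k ih =>
        obtain ⟨l, hl, e⟩ := ih
        rcases h _ _ (hadj (i+1+k)) with e' | e'
        · exact ⟨l, by omega, e'.symm.trans e⟩
        · exact ⟨k+1, le_refl _, e'.2⟩
    have bwd : ∀ k, k + 1 ≤ n → ∃ l, n - 1 - k ≤ l ∧ l ≤ n - 1 ∧ φ (v (i+1+(n-1-k))) = v (i+1+l) := by
      intro k
      induction k with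
      | zero =>
        intro _
        refine ⟨n-1, by omega, le_refl _, ?_⟩
        have : i + 1 + (n-1) = i + n := by omega
        simp only [Nat.sub_zero]
        rw [this, hper, h1]
      | succ k ih =>
        intro hk
        obtain ⟨l, hl, hl', e⟩ := ih (by omega)
        have e0 : i + 1 + (n - 1 - (k+1)) + 1 = i + 1 + (n-1-k) := by omega
        have := h _ _ (hadj (i+1+(n-1-(k+1))))
        rw [e0] at this
        rcases this with e' | e'
        · exact ⟨l, by omega, hl', e'.trans e⟩
        · exact ⟨n-1-(k+1), le_refl _, by omega, e'.1⟩
    have win : ∀ k, k < n → φ (v (i+1+k)) = v (i+1+k) := by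
      intro k hk
      obtain ⟨l, hl, e⟩ := fwd k
      obtain ⟨l', hl', hl2, e'⟩ := bwd (n-1-k) (by omega)
      have e0 : n - 1 - (n-1-k) = k := by omega
      rw [e0] at e' hl'
      have : l = l' := by
        by_contra hne
        exact hinj (i+1+l) (i+1+l') (by omega) (by omega) (e.symm.trans e')
      have : l = k := by omega
      rw [e, this]
    have shift : ∀ k j, v (j + k * n) = v j := by
      intro k
      induction k with
      | zero => intro j; simp
      | succ k ih => intro j; rw [Nat.succ_mul, ← add_assoc, hper, ih]
    intro j
    have e1 := shift (i+1) j
    have hge : i + 1 ≤ j + (i+1) * n := by nlinarith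
    obtain ⟨m, hm⟩ := Nat.exists_eq_add_of_le hge
    have e2 := shift (m / n) (i + 1 + m % n)
    have e3 : i + 1 + m % n + m / n * n = j + (i+1)*n := by
      have := Nat.mod_add_div' m n
      omega
    rw [e3, e1] at e2
    rw [e2]
    exact win _ (Nat.mod_lt _ (by omega))

structure TO (D : Set (Pref A)) (F : A → A → A) : Prop where
  U : ∀ a, F a a = a
  S1 : ∀ P ∈ D, ∀ a b, F (peak P) b = F a b ∨ prefers P (F (peak P) b) (F a b)
  S2 : ∀ P ∈ D, ∀ a b, F a (peak P) = F a b ∨ prefers P (F a (peak P)) (F a b)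

theorem TO.swap {D : Set (Pref A)} {F : A → A → A} (h : TO D F) : TO D (fun a b => F b a) :=
  ⟨h.U, fun P hP a b => h.S2 P hP b a, fun P hP a b => h.S1 P hP b a⟩

variable {D : Set (Pref A)} {F : A → A → A}

theorem TO.retr (h2 : 2 ≤ Fintype.card A) (h : TO D F) (b : A) :
    Retr (adjGraph D) (fun a => F a b) := by
  intro x y hxy
  obtain ⟨P, hP, P', hP', e1, e2, e3, e4, e5⟩ := (adj_iff h2).1 hxy
  have a1 := h.S1 P hP y b
  have a2 := h.S1 P' hP' x b
  rw [e1] at a1; rw [e3] at a2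
  rcases a1 with a1 | a1
  · left; exact a1
  rcases a2 with a2 | a2
  · left; exact a2.symm
  right
  have := swap_lemma h2 (e3.trans e2.symm) (e4.trans e1.symm) e5 a1 a2
  rw [e1, e2] at this
  exact this

theorem TO.idem (hr : ∀ a, ∃ P ∈ D, peak P = a) (h : TO D F) (a b : A) : F (F a b) b = F a b := by
  obtain ⟨P, hP, e⟩ := hr (F a b)
  have := h.S1 P hP a b
  rw [e] at this
  rcases this with h' | h'
  · exact h'
  · rw [← e] at h'; 
    have h3 : prefers P (F (peak P) b) (peak P) := by
      convert h' using 1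
    exact absurd h3 not_pr_peak

theorem TO.absorb (h2 : 2 ≤ Fintype.card A) (hc : (adjGraph D).Connected) (h : TO D F)
    {Pl Pu : Pref A} (hPl : Pl ∈ D) (hPu : Pu ∈ D) (hrev : Reversed Pl Pu) {x : A}
    (hx : F (peak Pl) (peak Pu) = x) (hx' : F (peak Pu) (peak Pl) = x) (a : A) : F a x = x := by
  have hr := fun a => minRich h2 hc a
  have uniq : ∀ v, F v (peak Pl) = v → F v (peak Pu) = v → v = x := by
    intro v h1 h3
    have a1 := h.S1 Pu hPu v (peak Pl)
    have a2 := h.S1 Pl hPl v (peak Pu)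
    rw [h1, hx'] at a1
    rw [h3, hx] at a2
    rcases a1 with a1 | a1
    · exact a1.symm
    rcases a2 with a2 | a2
    · exact a2.symm
    exact absurd a1 (pr_asymm ((hrev _ _).1 a2))
  have fl : F x (peak Pl) = x := by rw [← hx']; exact h.idem hr _ _
  have fu : F x (peak Pu) = x := by rw [← hx]; exact h.idem hr _ _
  have alt : ∀ y (w : (adjGraph D).Walk a y), y = x → F a (peak Pl) = x ∨ F a (peak Pu) = x := by
    intro y w
    induction w with
    | nil => rintro rfl; left; exact fl
    | @cons a v y hadj q ih =>
      intro hy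
      have r1 := h.retr h2 (peak Pl) _ _ hadj
      have r2 := h.retr h2 (peak Pu) _ _ hadj
      simp only at r1 r2
      rcases r1 with r1 | r1
      · rcases r2 with r2 | r2
        · rw [r1, r2]; exact ih hy
        · rcases ih hy with h' | h'
          · left; rw [r1, h']
          · have hvx : v = x := r2.2.symm.trans h'
            rw [hvx, fl] at r1
            left; exact r1
      · rcases r2 with r2 | r2
        · rcases ih hy with h' | h'
          · have hvx : v = x := r1.2.symm.trans h'
            rw [hvx, fu] at r2
            right; exact r2
          · right; rw [r2, h']
        · have := uniq a r1.1 r2.1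
          left; rw [r1.1, this]
  obtain ⟨w⟩ := hc.preconnected a x
  rcases alt x w rfl with e | e
  · have := h.swap.idem hr (peak Pl) a
    simp only [e] at this; exact this
  · have := h.swap.idem hr (peak Pu) a
    simp only [e] at this; exact this

theorem TO.no_dict (h2 : 2 ≤ Fintype.card A) (hc : (adjGraph D).Connected) (h : TO D F) {x : A}
    (hx : ∀ a, F a x = x) {C : Set A}
    (hC : ∀ φ, Retr (adjGraph D) φ → (∀ c ∈ C, φ c = c) ∨ (∀ c ∈ C, ∀ d ∈ C, φ c = φ d))
    (h3 : ∀ a b : A, ∃ c ∈ C, c ≠ a ∧ c ≠ b) {b0 : A} (hb0 : b0 ∈ C)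
    (hid : ∀ a ∈ C, F a b0 = a) : False := by
  have all : ∀ y z (w : (adjGraph D).Walk y z), (∀ a ∈ C, F a y = a) → (∀ a ∈ C, F a z = a) := by
    intro y z w
    induction w with
    | nil => exact id
    | @cons y y' z hadj q ih =>
      intro hy
      apply ih
      rcases hC _ (h.retr h2 y') with h' | h'
      · exact h'
      · exfalso
        have fix : ∀ a ∈ C, a ≠ y → F a y' = a := by
          intro a ha hay
          have := h.swap.retr h2 a _ _ hadj
          simp only at this
          rcases this with e | e
          · rw [← e, hy a ha]
          · rw [hy a ha] at e; exact absurd e.1 hay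
        obtain ⟨c, hc1, hc2, _⟩ := h3 y y
        obtain ⟨d, hd1, hd2, hd3⟩ := h3 y c
        have := h' c hc1 d hd1
        rw [fix c hc1 hc2, fix d hd1 hd2] at this
        exact hd3 this.symm
  obtain ⟨w⟩ := hc.preconnected b0 x
  obtain ⟨c, hc1, hc2, _⟩ := h3 x x
  have := all _ _ w hid c hc1
  rw [hx] at this
  exact hc2 this.symm

theorem TO.isTree (h2 : 2 ≤ Fintype.card A) (hc : (adjGraph D).Connected) (h : TO D F) {x : A}
    (hx : ∀ a, F a x = x) (hx' : ∀ a, F x a = x) : (adjGraph D).IsTree := by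
  refine ⟨hc, ?_⟩
  intro v0 c hcyc
  set n := c.length with hn
  have hn3 : 3 ≤ n := hcyc.three_le_length
  set v : ℕ → A := fun i => c.getVert (i % n) with hv
  have hper : ∀ i, v (i + n) = v i := by intro i; simp [hv]
  have hadj : ∀ i, (adjGraph D).Adj (v i) (v (i+1)) := by
    intro i
    have hlt : i % n < n := Nat.mod_lt _ (by omega)
    have := c.adj_getVert_succ hlt
    convert this using 1
    simp only [hv]
    by_cases he : i % n + 1 = n
    · have h0 : (i + 1) % n = 0 := by
        rw [Nat.add_mod, Nat.mod_eq_of_lt (by omega : 1 < n), he, Nat.mod_self]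
      rw [h0, he, hn, c.getVert_length, c.getVert_zero]
    · have : (i + 1) % n = i % n + 1 := by
        rw [Nat.add_mod, Nat.mod_eq_of_lt (by omega : 1 < n), Nat.mod_eq_of_lt (by omega)]
      rw [this]
  have hinj : ∀ i j, i < j → j < i + n → v i ≠ v j := by
    intro i j hij hj e
    have hi' : i % n < n := Nat.mod_lt _ (by omega)
    have hj' : j % n < n := Nat.mod_lt _ (by omega)
    have := hcyc.getVert_injOn' (by simp only [Set.mem_setOf_eq]; omega) (by simp only [Set.mem_setOf_eq]; omega) e
    have hd : n ∣ j - i := (Nat.modEq_iff_dvd' hij.le).1 this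
    have := Nat.le_of_dvd (by omega) hd
    omega
  have hC : ∀ φ, Retr (adjGraph D) φ → (∀ c ∈ Set.range v, φ c = c) ∨
      (∀ c ∈ Set.range v, ∀ d ∈ Set.range v, φ c = φ d) := by
    intro φ hφ
    rcases hφ.cyc hn3 hper hadj hinj with h' | h'
    · left; rintro _ ⟨i, rfl⟩; exact h' i
    · right; rintro _ ⟨i, rfl⟩ _ ⟨j, rfl⟩; exact h' i j
  have h3 : ∀ a b : A, ∃ c ∈ Set.range v, c ≠ a ∧ c ≠ b := by
    intro a b
    have n01 := hinj 0 1 (by omega) (by omega)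
    have n02 := hinj 0 2 (by omega) (by omega)
    have n12 := hinj 1 2 (by omega) (by omega)
    by_contra hcon
    push Not at hcon
    have c0 := hcon (v 0) ⟨0, rfl⟩
    have c1 := hcon (v 1) ⟨1, rfl⟩
    have c2 := hcon (v 2) ⟨2, rfl⟩
    by_cases e0 : v 0 = a
    · have e1 := c1 (fun e => n01 (e0.trans e.symm))
      have e2 := c2 (fun e => n02 (e0.trans e.symm))
      exact n12 (e1.trans e2.symm)
    · have f0 := c0 e0
      by_cases e1 : v 1 = a
      · have e2 := c2 (fun e => n12 (e1.trans e.symm))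
        exact n02 (f0.trans e2.symm)
      · exact n01 (f0.trans (c1 e1).symm)
  rcases hC _ (h.retr h2 (v 0)) with h' | h'
  · exact h.no_dict h2 hc hx hC h3 ⟨0, rfl⟩ h'
  · have n01 := hinj 0 1 (by omega) (by omega)
    have e : F (v 1) (v 0) = v 0 := by
      have := h' (v 1) ⟨1, rfl⟩ (v 0) ⟨0, rfl⟩
      simp only [h.U] at this; exact this
    refine h.swap.no_dict h2 hc hx' hC h3 (b0 := v 1) ⟨1, rfl⟩ ?_
    rcases hC _ (h.swap.retr h2 (v 1)) with h'' | h''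
    · exact h''
    · have := h'' (v 1) ⟨1, rfl⟩ (v 0) ⟨0, rfl⟩
      simp only [h.U, e] at this
      exact absurd this.symm n01

theorem TO.ssp (h2 : 2 ≤ Fintype.card A) (hG : (adjGraph D).IsTree) (h : TO D F) {x : A}
    (hx : ∀ a, F a x = x) (hx' : ∀ a, F x a = x) {P : Pref A} (hP : P ∈ D) :
    SSP (adjGraph D) x P := by
  have hcn := hG.connected
  rw [← semiSP_iff hG]
  constructor
  · intro c d hc hd hcd hcd'
    have e1 : F (peak P) c = c := by
      have r := h.swap.retr h2 (peak P)
      have a1 := r.intv hcn (a := c) (s := peak P) (h.U _)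
      have a2 := r.intv hcn (a := c) (s := x) (hx _)
      have := median_proj hG (p := peak P) (x := x) (c := c) (m := c) hc (left_mem_intv _ _) (left_mem_intv _ _)
      have hm : F (peak P) c ∈ intv (adjGraph D) (peak P) x := by
        have r' := h.retr h2 c
        exact (r'.intv hcn (a := peak P) (s := x) (hx' _))
      have h4 := median_proj hG hm a1 a2
      exact (projOn_eq hcn h4).symm.trans (projOn_eq hcn this)
    have e2 : F d c = d := by
      have r := h.retr h2 c
      have a1 := r.intv hcn (a := d) (s := c) (h.U _)
      have a2 := r.intv hcn (a := d) (s := x) (hx' _)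
      -- d ∈ ⟨c,x⟩
      have hdx : d ∈ intv (adjGraph D) c x := intv_trans' hcn hd hcd'
      have r' := h.swap.retr h2 d
      have a3 := r'.intv hcn (a := c) (s := x) (hx _)
      have h4 := median_proj hG a3 a1 a2
      have h5 := median_proj hG (p := c) (x := x) (c := d) (m := d) hdx (left_mem_intv _ _) (left_mem_intv _ _)
      exact (projOn_eq hcn h4).symm.trans (projOn_eq hcn h5)
    have := h.S1 P hP d c
    rw [e1, e2] at this
    exact this.resolve_left hcd
  · intro c hc
    have r := h.swap.retr h2 (peak P)
    have a1 := r.intv hcn (a := c) (s := peak P) (h.U _)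
    have a2 := r.intv hcn (a := c) (s := x) (hx _)
    have r' := h.retr h2 c
    have hm := r'.intv hcn (a := peak P) (s := x) (hx' _)
    rw [projOn_eq hcn (median_proj hG hm a1 a2)]
    have := h.S1 P hP c c
    rw [h.U] at this
    refine this.resolve_left (fun e => ?_)
    rw [e] at hm; exact hc hm

theorem part_A (h2 : 2 ≤ Fintype.card A) (hc : (adjGraph D).Connected) {Pl Pu : Pref A}
    (hPl : Pl ∈ D) (hPu : Pu ∈ D) (hrev : Reversed Pl Pu) {f : (Fin 2 → Pref A) → A}
    (hU : IsRule D f) (hT : TopsOnly D f) (hS : StrategyProof D f)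
    (hinv : f ![Pl, Pu] = f ![Pu, Pl]) :
    (adjGraph D).IsTree ∧ ∃ x, ∀ P ∈ D, SSP (adjGraph D) x P := by
  choose R hR eR using fun a => minRich h2 hc (D := D) a
  have ind : ∀ {P Q}, P ∈ D → Q ∈ D → InDom D ![P, Q] := by
    intro P Q hP hQ i; fin_cases i
    · exact hP
    · exact hQ
  have hF : ∀ P ∈ D, ∀ Q ∈ D, f ![P, Q] = f ![R (peak P), R (peak Q)] := by
    intro P hP Q hQ
    apply hT _ _ (ind hP hQ) (ind (hR _) (hR _))
    intro i; fin_cases i <;> simp [eR]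
  have hto : TO D (fun a b => f ![R a, R b]) := by
    refine ⟨?_, ?_, ?_⟩
    · intro a
      apply hU _ (ind (hR _) (hR _))
      intro i; fin_cases i <;> simp [eR]
    · intro P hP a b
      have := hS ![P, R b] (ind hP (hR b)) 0 (R a) (hR a)
      have e : Function.update ![P, R b] 0 (R a) = ![R a, R b] := by
        funext i; fin_cases i <;> rfl
      rw [hF P hP (R b) (hR b), eR, e] at this
      exact this
    · intro P hP a b
      have := hS ![R a, P] (ind (hR a) hP) 1 (R b) (hR b)
      have e : Function.update ![R a, P] 1 (R b) = ![R a, R b] := by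
        funext i; fin_cases i <;> rfl
      rw [hF (R a) (hR a) P hP, eR, e] at this
      exact this
  set x := f ![R (peak Pl), R (peak Pu)] with hx
  have e2 : f ![R (peak Pu), R (peak Pl)] = x := by
    rw [hx, ← hF Pl hPl Pu hPu, ← hF Pu hPu Pl hPl, hinv]
  have b1 := fun a => hto.absorb h2 hc hPl hPu hrev (x := x) hx.symm e2 a
  have b2 := fun a => hto.swap.absorb h2 hc hPl hPu hrev (x := x) e2 hx.symm a
  have ht := hto.isTree h2 hc b1 b2
  exact ⟨ht, x, fun P hP => hto.ssp h2 ht b1 b2 hP⟩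

end Inv


/-! ### Gluing trees -/

section Glue

theorem parent_tree (r : A) (par : A → A) (rank : A → ℕ)
    (h : ∀ v, v ≠ r → rank (par v) < rank v) :
    (SimpleGraph.fromRel (fun v w => v ≠ r ∧ par v = w)).IsTree := by
  set T := SimpleGraph.fromRel (fun v w => v ≠ r ∧ par v = w) with hT
  have hadj : ∀ v, v ≠ r → T.Adj v (par v) := by
    intro v hv
    rw [hT, SimpleGraph.fromRel_adj]
    refine ⟨fun e => ?_, Or.inl ⟨hv, rfl⟩⟩
    have := h v hv
    rw [← e] at this; omega
  have hreach : ∀ n v, rank v = n → T.Reachable v r := by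
    intro n
    induction n using Nat.strong_induction_on with
    | _ n ih =>
      intro v hv
      by_cases hvr : v = r
      · rw [hvr]
      · exact (hadj v hvr).reachable.trans (ih _ (hv ▸ h v hvr) _ rfl)
  have hconn : T.Connected := by
    constructor
    intro u v
    exact (hreach _ u rfl).trans (hreach _ v rfl).symm
  rw [SimpleGraph.isTree_iff_connected_and_card]
  refine ⟨hconn, ?_⟩
  have h1 := hconn.card_vert_le_card_edgeSet_add_one
  have h2 : Nat.card T.edgeSet ≤ Nat.card {v : A // v ≠ r} := by
    apply Nat.card_le_card_of_surjective
      (fun v : {v : A // v ≠ r} => (⟨s(v.1, par v.1), hadj v.1 v.2⟩ : T.edgeSet))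
    rintro ⟨e, he⟩
    induction e using Sym2.ind with
    | _ x y =>
      have he' : T.Adj x y := he
      rw [hT, SimpleGraph.fromRel_adj] at he'
      rcases he'.2 with ⟨hx, rfl⟩ | ⟨hy, rfl⟩
      · exact ⟨⟨x, hx⟩, rfl⟩
      · exact ⟨⟨y, hy⟩, Subtype.ext Sym2.eq_swap⟩
  have h3 : Nat.card {v : A // v ≠ r} + 1 = Nat.card A := by
    rw [Nat.card_eq_fintype_card, Nat.card_eq_fintype_card, Fintype.card_subtype_compl,
      Fintype.card_subtype_eq]
    have : 0 < Fintype.card A := Fintype.card_pos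
    omega
  omega

theorem exists_pos (X Y : Set A) (hd : ∀ z, z ∈ X → z ∉ Y) :
    ∃ (K : ℕ) (pos : A → ℕ), (∀ z ∈ X, pos z = 0) ∧ (∀ z ∈ Y, pos z = K + 1) ∧
      (∀ z, z ∉ X → z ∉ Y → 1 ≤ pos z ∧ pos z ≤ K) ∧
      (∀ z z', z ∉ X → z ∉ Y → z' ∉ X → z' ∉ Y → pos z = pos z' → z = z') ∧
      (∀ i, 1 ≤ i → i ≤ K → ∃ z, z ∉ X ∧ z ∉ Y ∧ pos z = i) := by
  let e := Fintype.equivFin {z : A // z ∉ X ∧ z ∉ Y}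
  refine ⟨Fintype.card {z : A // z ∉ X ∧ z ∉ Y},
    fun z => if h : z ∉ X ∧ z ∉ Y then (e ⟨z, h⟩).val + 1 else
      if z ∈ X then 0 else Fintype.card {z : A // z ∉ X ∧ z ∉ Y} + 1, ?_, ?_, ?_, ?_, ?_⟩
  · intro z hz; simp [hz]
  · intro z hz
    have : z ∉ X := fun h => hd z h hz
    simp [hz, this]
  · intro z h1 h2
    simp only [h1, h2, not_false_eq_true, and_self, dif_pos]
    have := (e ⟨z, h1, h2⟩).isLt
    omega
  · intro z z' h1 h2 h3 h4 he
    simp only [h1, h2, h3, h4, not_false_eq_true, and_self, dif_pos] at he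
    have : e ⟨z, h1, h2⟩ = e ⟨z', h3, h4⟩ := Fin.ext (by omega)
    exact congrArg Subtype.val (e.injective this)
  · intro i h1 h2
    obtain ⟨⟨z, hz⟩, he⟩ := e.surjective ⟨i - 1, by omega⟩
    refine ⟨z, hz.1, hz.2, ?_⟩
    simp only [dif_pos hz, he]; omega

theorem glue_tree {G : SimpleGraph A} (hG : G.Connected) {X Y : Set A} {a b : A}
    (hX : Gated G X a) (hY : Gated G Y b) (hd : ∀ z, z ∈ X → z ∉ Y) :
    ∃ T : SimpleGraph A, T.IsTree ∧ Gated T X a ∧ Gated T Y b ∧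
      (∀ x ∈ X, ∀ y ∈ X, T.Adj x y → G.Adj x y) ∧ (∀ x ∈ Y, ∀ y ∈ Y, T.Adj x y → G.Adj x y) ∧
      (∀ z, z ∈ intv T a b ↔ ¬ ((z ∈ X ∧ z ≠ a) ∨ (z ∈ Y ∧ z ≠ b))) := by
  obtain ⟨K, pos, p0, pK, pr, pinj, psurj⟩ := exists_pos X Y hd
  have haX := hX.1
  have hbY := hY.1
  have haY : a ∉ Y := hd a haX
  have hbX : b ∉ X := fun h => hd b h hbY
  have hpar : ∀ v, ∃ u, v ≠ a → 
      (v ∈ X → u ∈ X ∧ G.Adj v u ∧ G.dist u a < G.dist v a) ∧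
      (v ∈ Y → v ≠ b → u ∈ Y ∧ G.Adj v u ∧ G.dist u b < G.dist v b) ∧
      (v ∉ X → (v ∉ Y ∨ v = b) → (u = a ∨ (u ∉ X ∧ u ∉ Y)) ∧ pos u + 1 = pos v) := by
    intro v
    by_cases hva : v = a
    · exact ⟨v, fun h => absurd hva h⟩
    by_cases hvX : v ∈ X
    · obtain ⟨u, h1, h2, h3⟩ := exists_next hG hva
      exact ⟨u, fun _ => ⟨fun _ => ⟨hX.closed hG hvX haX h2, h1, h3⟩, fun h => absurd h (hd v hvX),
        fun h => absurd hvX h⟩⟩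
    by_cases hvY : v ∈ Y ∧ v ≠ b
    · obtain ⟨u, h1, h2, h3⟩ := exists_next hG hvY.2
      refine ⟨u, fun _ => ⟨fun h => absurd h hvX, fun _ _ => ⟨hY.closed hG hvY.1 hbY h2, h1, h3⟩, 
        fun _ h => ?_⟩⟩
      rcases h with h | h
      · exact absurd hvY.1 h
      · exact absurd h hvY.2
    have hv1 : 1 ≤ pos v ∧ pos v ≤ K + 1 := by
      by_cases h : v ∈ Y
      · rw [pK v h]; omega
      · have := pr v hvX h; omega
    have hu : ∃ u, (u = a ∨ (u ∉ X ∧ u ∉ Y)) ∧ pos u + 1 = pos v := by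
      by_cases h1 : pos v = 1
      · exact ⟨a, Or.inl rfl, by rw [p0 a haX, h1]⟩
      · obtain ⟨u, h3, h4, h5⟩ := psurj (pos v - 1) (by omega) (by omega)
        exact ⟨u, Or.inr ⟨h3, h4⟩, by omega⟩
    obtain ⟨u, hu⟩ := hu
    exact ⟨u, fun _ => ⟨fun h => absurd h hvX, fun h h' => absurd ⟨h, h'⟩ hvY, fun _ _ => hu⟩⟩
  choose par hp using hpar
  have hrank : ∀ v, v ≠ a → 
      (fun v => pos v + if v ∈ X then G.dist v a else if v ∈ Y then G.dist v b else 0) (par v) <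
      (fun v => pos v + if v ∈ X then G.dist v a else if v ∈ Y then G.dist v b else 0) v := by
    intro v hv
    obtain ⟨h1, h2, h3⟩ := hp v hv
    simp only
    by_cases hvX : v ∈ X
    · obtain ⟨q1, q2, q3⟩ := h1 hvX
      rw [p0 _ q1, p0 _ hvX, if_pos q1, if_pos hvX]; omega
    · by_cases hvY : v ∈ Y ∧ v ≠ b
      · obtain ⟨q1, q2, q3⟩ := h2 hvY.1 hvY.2
        have q4 : par v ∉ X := fun h => hd _ h q1
        rw [pK _ q1, pK _ hvY.1, if_neg q4, if_pos q1, if_neg hvX, if_pos hvY.1]; omega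
      · obtain ⟨q1, q2⟩ := h3 hvX (by tauto)
        have : (if par v ∈ X then G.dist (par v) a else if par v ∈ Y then G.dist (par v) b else 0) = 0 := by
          rcases q1 with q | q
          · rw [q, if_pos haX, SimpleGraph.dist_self]
          · rw [if_neg q.1, if_neg q.2]
        rw [this]; omega
  have hT := parent_tree a par
    (fun v => pos v + if v ∈ X then G.dist v a else if v ∈ Y then G.dist v b else 0) hrank
  set T := SimpleGraph.fromRel (fun v w => v ≠ a ∧ par v = w) with hTdef
  have hadj : ∀ x y, T.Adj x y → (x ≠ a ∧ par x = y) ∨ (y ≠ a ∧ par y = x) := by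
    intro x y h
    rw [hTdef, SimpleGraph.fromRel_adj] at h
    exact h.2
  have gX : Gated T X a := by
    refine ⟨haX, fun x hx y hy => mem_intv_of_sep hT.connected (fun w => gate haX ?_ w hx hy)⟩
    intro x hx hxa y hy hxy
    rcases hadj _ _ hxy with ⟨_, e⟩ | ⟨hya, e⟩
    · have := ((hp x hxa).1 hx).1
      rw [e] at this; exact hy this
    · obtain ⟨h1, h2, h3⟩ := hp y hya
      rw [e] at h2 h3
      by_cases hvY : y ∈ Y ∧ y ≠ b
      · exact hd x hx (h2 hvY.1 hvY.2).1
      · rcases (h3 hy (by tauto)).1 with h | h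
        · exact hxa h
        · exact h.1 hx
  have gY : Gated T Y b := by
    refine ⟨hbY, fun x hx y hy => mem_intv_of_sep hT.connected (fun w => gate hbY ?_ w hx hy)⟩
    intro x hx hxb y hy hxy
    rcases hadj _ _ hxy with ⟨hxa, e⟩ | ⟨hya, e⟩
    · have := ((hp x hxa).2.1 hx hxb).1
      rw [e] at this; exact hy this
    · obtain ⟨h1, h2, h3⟩ := hp y hya
      rw [e] at h1 h3
      by_cases hyX : y ∈ X
      · exact hd x (h1 hyX).1 hx
      · rcases (h3 hyX (Or.inl hy)).1 with h | h
        · rw [h] at hx; exact haY hx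
        · exact h.2 hx
  have aX : ∀ x y, x ∈ X → y ∈ X → x ≠ a → par x = y → G.Adj x y := by
    intro x y hx hy hxa e
    rw [← e]; exact ((hp x hxa).1 hx).2.1
  have aY : ∀ x y, x ∈ Y → y ∈ Y → x ≠ a → par x = y → G.Adj x y := by
    intro x y hx hy hxa e
    by_cases hxb : x = b
    · exfalso
      have hxX : x ∉ X := by rw [hxb]; exact hbX
      rcases ((hp x hxa).2.2 hxX (Or.inr hxb)).1 with h | h
      · rw [← e, h] at hy; exact haY hy
      · rw [e] at h; exact h.2 hy
    · rw [← e]; exact ((hp x hxa).2.1 hx hxb).2.1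
  have pos1 : ∀ v, v ≠ a → pos v ≤ pos (par v) + 1 ∧ pos (par v) ≤ pos v := by
    intro v hv
    obtain ⟨h1, h2, h3⟩ := hp v hv
    by_cases hvX : v ∈ X
    · have := (h1 hvX).1
      rw [p0 _ this, p0 _ hvX]; omega
    · by_cases hvY : v ∈ Y ∧ v ≠ b
      · have := (h2 hvY.1 hvY.2).1
        rw [pK _ this, pK _ hvY.1]; omega
      · have := (h3 hvX (by tauto)).2
        omega
  refine ⟨T, hT, gX, gY, ?_, ?_, ?_⟩
  · intro x hx y hy h
    rcases hadj _ _ h with ⟨h1, e⟩ | ⟨h1, e⟩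
    · exact aX x y hx hy h1 e
    · exact (aX y x hy hx h1 e).symm
  · intro x hx y hy h
    rcases hadj _ _ h with ⟨h1, e⟩ | ⟨h1, e⟩
    · exact aY x y hx hy h1 e
    · exact (aY y x hy hx h1 e).symm
  · intro z
    constructor
    · rintro hz (⟨hzX, hza⟩ | ⟨hzY, hzb⟩)
      · have := gX.2 z hzX b hbX
        rw [intv_comm] at this hz
        exact hza (intv_antisymm hT.connected hz this)
      · have := gY.2 z hzY a haY
        rw [intv_comm] at this
        exact hzb (intv_antisymm hT.connected hz this)
    · intro hz
      by_cases hza : z = a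
      · rw [hza]; exact left_mem_intv _ _
      by_cases hzb : z = b
      · rw [hzb]; exact right_mem_intv _ _
      have hzX : z ∉ X := fun h => hz (Or.inl ⟨h, hza⟩)
      have hzY : z ∉ Y := fun h => hz (Or.inr ⟨h, hzb⟩)
      have hzp := pr z hzX hzY
      apply mem_intv_of_sep hT.connected
      intro w
      refine gate (X := {v | pos v < pos z ∨ v = z}) (a := z) (Or.inr rfl) ?_ w ?_ ?_
      · intro x hx hxz y hy hxy
        have hx' : pos x < pos z := hx.resolve_right hxz
        have hy' : ¬ (pos y < pos z ∨ y = z) := hy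
        rw [not_or] at hy'
        have hyz : pos y ≠ pos z := by
          intro e
          have hyX : y ∉ X := fun h => by rw [p0 y h] at e; omega
          have hyY : y ∉ Y := fun h => by rw [pK y h] at e; omega
          exact hy'.2 (pinj y z hyX hyY hzX hzY e)
        rcases hadj _ _ hxy with ⟨h1, e⟩ | ⟨h1, e⟩
        · have := pos1 x h1; rw [e] at this; omega
        · have := pos1 y h1; rw [e] at this; omega
      · left; rw [p0 a haX]; omega
      · show ¬ (pos b < pos z ∨ b = z)
        rw [pK b hbY]
        rintro (h | h)
        · omega
        · exact hzb h.symm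

theorem glue_side {T : SimpleGraph A} (hT : T.IsTree) {X Y : Set A} {a b : A}
    (hX : Gated T X a) (hY : Gated T Y b) (hd : ∀ z, z ∈ X → z ∉ Y)
    (hI : ∀ z, z ∈ intv T a b ↔ ¬ ((z ∈ X ∧ z ≠ a) ∨ (z ∈ Y ∧ z ≠ b))) :
    sideSet T a b = X := by
  have hbX : b ∉ X := fun h => hd b h hY.1
  ext z
  constructor
  · intro hz
    have hz : a ∈ intv T z b := hz
    by_contra hzX
    by_cases hzY : z ∈ Y
    · exact hd a hX.1 (hY.closed hT.connected hzY hY.1 hz)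
    · have h1 : z ∈ intv T a b := (hI z).2 (by tauto)
      rw [intv_comm] at hz h1
      have := intv_antisymm hT.connected hz h1
      exact hzX (this ▸ hX.1)
  · intro hz
    exact hX.2 z hz b hbX

theorem glue_dual {T : SimpleGraph A} (hT : T.IsTree) {X Y : Set A} {a b : A}
    (hX : Gated T X a) (hY : Gated T Y b) (hd : ∀ z, z ∈ X → z ∉ Y)
    (hI : ∀ z, z ∈ intv T a b ↔ ¬ ((z ∈ X ∧ z ≠ a) ∨ (z ∈ Y ∧ z ≠ b))) :
    DualThresholds T a b := by
  refine ⟨fun e => hd a hX.1 (e ▸ hY.1), fun c hc => ?_⟩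
  have := fun h => hc ((hI c).2 h)
  rw [imp_false, not_not] at this
  rcases this with h | h
  · left
    apply projOn_eq hT.connected
    refine ⟨left_mem_intv _ _, fun z hz => ?_⟩
    by_cases hza : z = a
    · rw [hza]; exact right_mem_intv _ _
    · exact hX.2 c h.1 z (fun hh => (hI z).1 hz (Or.inl ⟨hh, hza⟩))
  · right
    apply projOn_eq hT.connected
    refine ⟨right_mem_intv _ _, fun z hz => ?_⟩
    by_cases hza : z = b
    · rw [hza]; exact right_mem_intv _ _
    · exact hY.2 c h.1 z (fun hh => (hI z).1 hz (Or.inr ⟨hh, hza⟩))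

/-- The full glueing statement. -/
theorem glue {G : SimpleGraph A} (hG : G.Connected) {X Y : Set A} {a b : A}
    (hX : Gated G X a) (hY : Gated G Y b) (hd : ∀ z, z ∈ X → z ∉ Y) :
    ∃ T : SimpleGraph A, T.IsTree ∧ Gated T X a ∧ Gated T Y b ∧
      (∀ x ∈ X, ∀ y ∈ X, T.Adj x y → G.Adj x y) ∧ (∀ x ∈ Y, ∀ y ∈ Y, T.Adj x y → G.Adj x y) ∧
      (∀ z, z ∈ intv T a b ↔ ¬ ((z ∈ X ∧ z ≠ a) ∨ (z ∈ Y ∧ z ≠ b))) ∧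
      sideSet T a b = X ∧ sideSet T b a = Y ∧ DualThresholds T a b := by
  obtain ⟨T, hT, gX, gY, aX, aY, hI⟩ := glue_tree hG hX hY hd
  refine ⟨T, hT, gX, gY, aX, aY, hI, glue_side hT gX gY hd hI, ?_, glue_dual hT gX gY hd hI⟩
  apply glue_side hT gY gX (fun z h h' => hd z h' h)
  intro z
  rw [intv_comm, hI, or_comm]

end Glue


/-! ### Semi-hybrid structures -/

section Hybrid

structure HS (D : Set (Pref A)) (T : SimpleGraph A) (X Y : Set A) (a b : A) : Prop where
  tree : T.IsTree
  gX : Gated T X a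
  gY : Gated T Y b
  dis : ∀ z, z ∈ X → z ∉ Y
  zone : ∀ z, z ∈ intv T a b ↔ ¬ ((z ∈ X ∧ z ≠ a) ∨ (z ∈ Y ∧ z ≠ b))
  bestX : ∀ P ∈ D, peak P ∉ X → ∀ y ∈ X, y ≠ a → prefers P a y
  bestY : ∀ P ∈ D, peak P ∉ Y → ∀ y ∈ Y, y ≠ b → prefers P b y
  sspX : ∀ P ∈ D, peak P ∈ X → SSP T a P
  sspY : ∀ P ∈ D, peak P ∈ Y → SSP T b P

variable {D : Set (Pref A)} {T : SimpleGraph A} {X Y : Set A} {a b : A}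

theorem HS.swap (h : HS D T X Y a b) : HS D T Y X b a where
  tree := h.tree
  gX := h.gY
  gY := h.gX
  dis := fun z h1 h2 => h.dis z h2 h1
  zone := fun z => by rw [intv_comm, h.zone, or_comm]
  bestX := h.bestY
  bestY := h.bestX
  sspX := h.sspY
  sspY := h.sspX

theorem ssp_peak (hT : T.Connected) {x : A} {P : Pref A} (h : peak P = x) : SSP T x P := by
  intro s d hsd hs hs'
  rw [h] at hs
  have := intv_self hT hs
  rw [this, ← h]
  apply peak_best
  rintro rfl
  exact hsd (this.trans h.symm)

theorem HS.to_sh (h : HS D T X Y a b) :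
    DualThresholds T a b ∧ D ⊆ {P | SemiHybridPref T a b P} := by
  refine ⟨glue_dual h.tree h.gX h.gY h.dis h.zone, fun P hP => ?_⟩
  have e1 := glue_side h.tree h.gX h.gY h.dis h.zone
  have e2 := glue_side h.tree h.swap.gX h.swap.gY h.swap.dis h.swap.zone
  have bX : (peak P ∉ X ∨ peak P = a) → IsBestOf P a X := by
    intro hh
    refine ⟨h.gX.1, fun y hy hya => ?_⟩
    rcases hh with hh | hh
    · exact h.bestX P hP hh y hy hya
    · rw [← hh] at hya ⊢; exact peak_best hya
  have bY : (peak P ∉ Y ∨ peak P = b) → IsBestOf P b Y := by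
    intro hh
    refine ⟨h.gY.1, fun y hy hya => ?_⟩
    rcases hh with hh | hh
    · exact h.bestY P hP hh y hy hya
    · rw [← hh] at hya ⊢; exact peak_best hya
  show SemiHybridPref T a b P
  unfold SemiHybridPref
  rw [e1, e2]
  refine ⟨?_, ?_, ?_⟩
  · rintro ⟨h1, h2⟩
    exact ⟨(semiSP_iff h.tree).2 (h.sspX P hP h1), bY (Or.inl (h.dis _ h1))⟩
  · rintro ⟨h1, h2⟩
    exact ⟨(semiSP_iff h.tree).2 (h.sspY P hP h1), bX (Or.inl (h.swap.dis _ h1))⟩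
  · intro hz
    rw [h.zone] at hz
    exact ⟨bX (by tauto), bY (by tauto)⟩

theorem sideSet_gated (hT : T.IsTree) (a b : A) : Gated T (sideSet T a b) a := by
  refine ⟨left_mem_intv _ _, fun x hx y hy => ?_⟩
  have hx : a ∈ intv T x b := hx
  have hy : ¬ a ∈ intv T y b := hy
  exact (intv_split hT hx y).resolve_right hy

theorem HS.of_sh (hT : T.IsTree) (hd : DualThresholds T a b)
    (hs : D ⊆ {P | SemiHybridPref T a b P}) :
    HS D T (sideSet T a b) (sideSet T b a) a b := by
  have hcn := hT.connected
  have dis : ∀ z, z ∈ sideSet T a b → z ∉ sideSet T b a := by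
    intro z h1 h2
    exact hd.1 (intv_antisymm hcn (x := z) h1 h2)
  have zone : ∀ z, z ∈ intv T a b ↔ ¬ ((z ∈ sideSet T a b ∧ z ≠ a) ∨ (z ∈ sideSet T b a ∧ z ≠ b)) := by
    intro z
    constructor
    · rintro hz (⟨h1, h2⟩ | ⟨h1, h2⟩)
      · have h1 : a ∈ intv T z b := h1
        rw [intv_comm] at h1 hz
        exact h2 (intv_antisymm hcn hz h1)
      · have h1 : b ∈ intv T z a := h1
        rw [intv_comm] at h1
        exact h2 (intv_antisymm hcn hz h1)
    · intro hz
      by_contra hc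
      apply hz
      have hsp := projOn_spec hT a b z
      rcases hd.2 z hc with e | e
      · left
        rw [e] at hsp
        exact ⟨hsp.2 b (right_mem_intv _ _), fun e' => hc (e' ▸ left_mem_intv _ _)⟩
      · right
        rw [e] at hsp
        exact ⟨hsp.2 a (left_mem_intv _ _), fun e' => hc (e' ▸ right_mem_intv _ _)⟩
  refine ⟨hT, sideSet_gated hT a b, sideSet_gated hT b a, dis, zone, ?_, ?_, ?_, ?_⟩
  · intro P hP hp y hy hya
    have h := hs hP
    by_cases hz : peak P ∈ intv T a b
    · exact (h.2.2 hz).1.2 y hy hya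
    · rw [zone, not_not] at hz
      rcases hz with hz | hz
      · exact absurd hz.1 hp
      · exact (h.2.1 hz).2.2 y hy hya
  · intro P hP hp y hy hya
    have h := hs hP
    by_cases hz : peak P ∈ intv T a b
    · exact (h.2.2 hz).2.2 y hy hya
    · rw [zone, not_not] at hz
      rcases hz with hz | hz
      · exact (h.1 hz).2.2 y hy hya
      · exact absurd hz.1 hp
  · intro P hP hp
    by_cases e : peak P = a
    · exact ssp_peak hcn e
    · exact (semiSP_iff hT).1 ((hs hP).1 ⟨hp, e⟩).1
  · intro P hP hp
    by_cases e : peak P = b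
    · exact ssp_peak hcn e
    · exact (semiSP_iff hT).1 ((hs hP).2.1 ⟨hp, e⟩).1

theorem part_C (h2 : 2 ≤ Fintype.card A) (hc : (adjGraph D).Connected)
    (hno : (adjGraph D).IsTree → ∀ x, ¬ ∀ P ∈ D, SSP (adjGraph D) x P) : SemiHybridDomain D := by
  have hex : ∃ n : ℕ, ∃ (T : SimpleGraph A) (a b : A), (T.IsTree ∧ DualThresholds T a b ∧
      D ⊆ {P | SemiHybridPref T a b P}) ∧ (intv T a b).ncard = n := by
    obtain ⟨a, b, hne⟩ := (Fintype.one_lt_card_iff_nontrivial.1 h2).exists_pair_ne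
    have g : ∀ (G : SimpleGraph A) (c : A), Gated G {c} c := by
      intro G c
      refine ⟨rfl, ?_⟩
      rintro x rfl y _
      exact left_mem_intv _ _
    have hd : ∀ z, z ∈ ({a} : Set A) → z ∉ ({b} : Set A) := by
      rintro z rfl h; exact hne h
    obtain ⟨T, hT, gX, gY, aX, aY, hI, -, -, -⟩ := glue hc (g _ a) (g _ b) hd
    have hs : HS D T {a} {b} a b := by
      refine ⟨hT, gX, gY, hd, hI, ?_, ?_, ?_, ?_⟩
      · rintro P hP _ y rfl h; exact absurd rfl h
      · rintro P hP _ y rfl h; exact absurd rfl h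
      · intro P hP h; exact ssp_peak hT.connected h
      · intro P hP h; exact ssp_peak hT.connected h
    exact ⟨_, T, a, b, ⟨hT, hs.to_sh⟩, rfl⟩
  obtain ⟨T, a, b, ⟨h1, h3, h4⟩, h5⟩ := Nat.find_spec hex
  refine ⟨T, a, b, h1, h3, h4, hc, ?_, ?_⟩
  · rintro ⟨T', a', b', k1, k2, k3, k4⟩
    have := Set.ncard_lt_ncard k4 (Set.toFinite _)
    rw [h5] at this
    exact Nat.find_min hex this ⟨T', a', b', ⟨k1, k2, k3⟩, rfl⟩
  · intro hG x hx
    by_contra hcon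
    push Not at hcon
    exact hno hG x (fun P hP => (semiSP_iff hG).1 (hcon P hP))

theorem HS.gatedG (h2 : 2 ≤ Fintype.card A) (hc : (adjGraph D).Connected) (h : HS D T X Y a b) :
    Gated (adjGraph D) X a := by
  refine ⟨h.gX.1, fun x hx y hy => mem_intv_of_sep hc (fun w => gate h.gX.1 ?_ w hx hy)⟩
  intro x hx hxa y hy hxy
  obtain ⟨P, hP, P', hP', e1, e2, e3, e4, e5⟩ := (adj_iff h2).1 hxy
  have h1 := h.bestX P' hP' (by rw [e3]; exact hy) x hx hxa
  rw [← e4] at h1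
  have := eq_peak_of_pr_second h2 h1
  rw [e3] at this
  exact hy (this ▸ h.gX.1)

theorem HS.adjT (h2 : 2 ≤ Fintype.card A) (h : HS D T X Y a b) :
    ∀ x ∈ X, ∀ y ∈ X, (adjGraph D).Adj x y → T.Adj x y := by
  have hT := h.tree
  have hcn := hT.connected
  have key : ∀ x ∈ X, ∀ y ∈ X, (adjGraph D).Adj x y → y ∈ intv T x a → T.Adj x y := by
    intro x hx y hy hxy hya
    obtain ⟨P, hP, P', hP', e1, e2, e3, e4, e5⟩ := (adj_iff h2).1 hxy
    apply adj_of_intv hcn hxy.ne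
    intro s hs
    by_cases hsy : s = y
    · right; exact hsy
    · left
      have := h.sspX P hP (by rw [e1]; exact hx) s y hsy
        (by rw [e1]; exact intv_trans hcn hya hs) (by rw [e1]; exact hs)
      rw [← e2] at this
      rw [eq_peak_of_pr_second h2 this, e1]
  intro x hx y hy hxy
  have hm := projOn_spec hT x a y
  set m := projOn T (intv T x a) y
  by_cases hmy : m = y
  · exact key x hx y hy hxy (hmy ▸ hm.1)
  · obtain ⟨P, hP, P', hP', e1, e2, e3, e4, e5⟩ := (adj_iff h2).1 hxy
    have := h.sspX P hP (by rw [e1]; exact hx) m y hmy (by rw [e1]; exact hm.1)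
      (by rw [e1, intv_comm]; exact hm.2 _ (left_mem_intv _ _))
    rw [← e2] at this
    have hmx := eq_peak_of_pr_second h2 this
    rw [e1] at hmx
    have hya := hm.2 a (right_mem_intv _ _)
    rw [hmx] at hya
    exact (key y hy x hx hxy.symm hya).symm

theorem HS.sspG (h2 : 2 ≤ Fintype.card A) (hG : (adjGraph D).IsTree) (h : HS D T X Y a b) :
    ∀ P ∈ D, peak P ∈ X → SSP (adjGraph D) a P := by
  intro P hP hp
  have g := h.gatedG h2 hG.connected
  exact ssp_transfer h.tree hG h.gX g
    (fun x hx y hy => (iso_intv hG h.tree g h.gX (h.adjT h2) hx hy).symm) hp (h.sspX P hP hp)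

theorem HS.move (h2 : 2 ≤ Fintype.card A) (hG : (adjGraph D).IsTree) (h : HS D T X Y a b) {x : A}
    (hx : ∀ P ∈ D, SSP (adjGraph D) x P) (hxX : x ∈ X) : ∀ P ∈ D, SSP (adjGraph D) a P := by
  intro P hP
  by_cases hp : peak P ∈ X
  · exact h.sspG h2 hG P hP hp
  · apply ssp_sub hG (hx P hP)
    rw [intv_comm]
    exact (h.gatedG h2 hG.connected).2 x hxX _ hp

/-- a subtree hanging off `x` towards `v` -/
def br (G : SimpleGraph A) (x v : A) : Set A := {c | x ∉ intv G v c}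

theorem br_gate {G : SimpleGraph A} (hG : G.IsTree) (x v : A) : Gated G {c | c ∉ br G x v} x := by
  have e : ∀ c, c ∉ br G x v ↔ x ∈ intv G v c := fun c => not_not
  refine ⟨(e x).2 (right_mem_intv _ _), fun c hc d hd => ?_⟩
  have hc : x ∈ intv G v c := (e c).1 hc
  have hd : ¬ x ∈ intv G v d := fun h => hd ((e d).2 h)
  rw [intv_comm]
  exact (intv_split hG hc d).resolve_left hd

theorem HS.br_avoid (h2 : 2 ≤ Fintype.card A) (hG : (adjGraph D).IsTree) (h : HS D T X Y a b) {x v : A}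
    (hxz : x ∈ intv T a b) (hvz : v ∈ intv T a b) (hvx : v ≠ x) (hb : b ∉ br (adjGraph D) x v) {c : A}
    (hc : c ∈ br (adjGraph D) x v) : c ∉ Y := by
  intro hcY
  have gY := h.swap.gatedG h2 hG.connected
  have h1 := (br_gate hG x v).2 b hb c (fun hh => hh hc)
  have hxY := gY.closed hG.connected gY.1 hcY h1
  have hxb : x = b := by
    by_contra hne
    exact (h.zone x).1 hxz (Or.inr ⟨hxY, hne⟩)
  have hvY : v ∉ Y := fun hh => (h.zone v).1 hvz (Or.inr ⟨hh, hxb ▸ hvx⟩)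
  have := gY.2 c hcY v hvY
  rw [intv_comm, ← hxb] at this
  exact hc this

theorem HS.core (h2 : 2 ≤ Fintype.card A) (hG : (adjGraph D).IsTree) {Z : Set A}
    (hmin : ¬ ∃ (T' : SimpleGraph A) (a' b' : A), T'.IsTree ∧ DualThresholds T' a' b' ∧
      D ⊆ {P | SemiHybridPref T' a' b' P} ∧ intv T' a' b' ⊂ Z)
    {x v u : A} (hx : ∀ P ∈ D, SSP (adjGraph D) x P) (hxz : x ∈ Z) (huz : u ∈ Z)
    (hxv : (adjGraph D).Adj x v) (hxu : (adjGraph D).Adj x u) (hvu : v ≠ u)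
    {W : Set A} {w : A} (gW : Gated (adjGraph D) W w) (hwz : w ∈ Z)
    (hW : ∀ c ∈ W, c ∈ br (adjGraph D) x v) (hZ : ∀ c ∈ br (adjGraph D) x v, c ∈ W ∨ c ∈ Z)
    (best : ∀ P ∈ D, peak P ∉ W → ∀ y ∈ W, y ≠ w → prefers P w y)
    (ssp : ∀ P ∈ D, peak P ∈ W → SSP (adjGraph D) w P) : False := by
  have gB := br_gate hG x v
  have hd : ∀ z, z ∈ W → z ∉ {c | c ∉ br (adjGraph D) x v} := fun z hz hz' => hz' (hW z hz)
  obtain ⟨T', hT', gX', gY', aX, aY, hI, -, -, -⟩ := glue hG.connected gW gB hd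
  have hs : HS D T' W {c | c ∉ br (adjGraph D) x v} w x := by
    refine ⟨hT', gX', gY', hd, hI, best, ?_, ?_, ?_⟩
    · intro P hP hp y hy hyx
      have := gB.2 y hy _ hp
      rw [intv_comm] at this
      exact hx P hP x y (Ne.symm hyx) (right_mem_intv _ _) this
    · intro P hP hp
      exact ssp_transfer hG hT' gW gX'
        (fun s hs t ht => (iso_intv hT' hG gX' gW aX hs ht).symm) hp (ssp P hP hp)
    · intro P hP hp
      exact ssp_transfer hG hT' gB gY'
        (fun s hs t ht => (iso_intv hT' hG gY' gB aY hs ht).symm) hp (hx P hP)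
  refine hmin ⟨T', w, x, hT', hs.to_sh.1, hs.to_sh.2, ?_, ?_⟩
  · intro z hz
    rw [hI] at hz
    by_cases hzw : z = w
    · rw [hzw]; exact hwz
    by_cases hzx : z = x
    · rw [hzx]; exact hxz
    have hzb : z ∈ br (adjGraph D) x v := by
      by_contra hcon
      exact hz (Or.inr ⟨hcon, hzx⟩)
    rcases hZ z hzb with h | h
    · exact absurd (Or.inl ⟨h, hzw⟩) hz
    · exact h
  · intro hsub
    have := hsub huz
    rw [hI] at this
    apply this
    right
    refine ⟨fun hh => ?_, hxu.ne.symm⟩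
    exact hh (mid_mem hG hxv.symm hxu hvu)

theorem HS.core2 (h2 : 2 ≤ Fintype.card A) (hG : (adjGraph D).IsTree) (h : HS D T X Y a b)
    (hmin : ¬ ∃ (T' : SimpleGraph A) (a' b' : A), T'.IsTree ∧ DualThresholds T' a' b' ∧
      D ⊆ {P | SemiHybridPref T' a' b' P} ∧ intv T' a' b' ⊂ intv T a b)
    {x v u : A} (hx : ∀ P ∈ D, SSP (adjGraph D) x P) (hxz : x ∈ intv T a b)
    (hvz : v ∈ intv T a b) (huz : u ∈ intv T a b)
    (hxv : (adjGraph D).Adj x v) (hxu : (adjGraph D).Adj x u) (hvu : v ≠ u)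
    (ha : a ∈ br (adjGraph D) x v) (hb : b ∉ br (adjGraph D) x v) : False := by
  have gX := h.gatedG h2 hG.connected
  refine HS.core h2 hG hmin hx hxz huz hxv hxu hvu gX (left_mem_intv _ _) ?_ ?_ h.bestX
    (h.sspG h2 hG)
  · intro c hc
    by_contra hcon
    have h1 := (br_gate hG x v).2 c hcon a (fun hh => hh ha)
    have h3 := gX.closed hG.connected hc gX.1 h1
    have hxa : x = a := by
      by_contra hne
      exact (h.zone x).1 hxz (Or.inl ⟨h3, hne⟩)
    rw [← hxa] at ha
    exact ha (right_mem_intv _ _)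
  · intro c hc
    have := h.br_avoid h2 hG hxz hvz hxv.ne.symm hb hc
    by_cases hcX : c ∈ X
    · left; exact hcX
    · right; rw [h.zone]; tauto

theorem HS.core3 (h2 : 2 ≤ Fintype.card A) (hG : (adjGraph D).IsTree) (h : HS D T X Y a b)
    (hmin : ¬ ∃ (T' : SimpleGraph A) (a' b' : A), T'.IsTree ∧ DualThresholds T' a' b' ∧
      D ⊆ {P | SemiHybridPref T' a' b' P} ∧ intv T' a' b' ⊂ intv T a b)
    {x v u : A} (hx : ∀ P ∈ D, SSP (adjGraph D) x P) (hxz : x ∈ intv T a b)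
    (hvz : v ∈ intv T a b) (huz : u ∈ intv T a b)
    (hxv : (adjGraph D).Adj x v) (hxu : (adjGraph D).Adj x u) (hvu : v ≠ u)
    (hab : ¬ (a ∈ br (adjGraph D) x v ∧ b ∈ br (adjGraph D) x v)) : False := by
  by_cases ha : a ∈ br (adjGraph D) x v
  · have hb : b ∉ br (adjGraph D) x v := fun hb => hab ⟨ha, hb⟩
    exact h.core2 h2 hG hmin hx hxz hvz huz hxv hxu hvu ha hb
  · by_cases hb : b ∈ br (adjGraph D) x v
    · have hs := h.swap
      rw [intv_comm] at hmin hxz hvz huz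
      exact hs.core2 h2 hG hmin hx hxz hvz huz hxv hxu hvu hb ha
    · have hvb : v ∈ br (adjGraph D) x v := fun hh => hxv.ne (intv_self hG.connected hh)
      refine HS.core h2 hG hmin hx hxz huz hxv hxu hvu (W := {v}) (w := v) ⟨rfl, ?_⟩ hvz ?_ ?_ ?_ ?_
      · rintro s rfl y _; exact left_mem_intv _ _
      · rintro c rfl; exact hvb
      · intro c hc
        right
        have h3 := h.br_avoid h2 hG hxz hvz hxv.ne.symm hb hc
        have hxz' := hxz
        have hvz' := hvz
        rw [intv_comm] at hxz' hvz'
        have h4 := h.swap.br_avoid h2 hG hxz' hvz' hxv.ne.symm ha hc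
        rw [h.zone]; tauto
      · rintro P hP _ y rfl hh; exact absurd rfl hh
      · intro P hP hp; exact ssp_peak hG.connected hp

theorem HS.next_zone (h2 : 2 ≤ Fintype.card A) (hG : (adjGraph D).IsTree) (h : HS D T X Y a b)
    {x v z : A} (hxz : x ∈ intv T a b) (hz : z ∈ intv T a b) (hzx : z ≠ x)
    (hxv : (adjGraph D).Adj x v) (hv : v ∈ intv (adjGraph D) x z) : ¬ (v ∈ X ∧ v ≠ a) := by
  rintro ⟨hvX, hva⟩
  have gX := h.gatedG h2 hG.connected
  have out : ∀ y, y ∈ intv T a b → y ≠ a → y ∉ X := fun y hy hya hyX =>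
    (h.zone y).1 hy (Or.inl ⟨hyX, hya⟩)
  by_cases hxa : x = a
  · have := gX.2 v hvX z (out z hz (hxa ▸ hzx))
    rw [hxa] at hv
    rw [intv_comm] at hv this
    exact hva (intv_antisymm hG.connected hv this)
  · have hxX := out x hxz hxa
    have := sep_of_mem_intv hG (gX.2 v hvX x hxX) (SimpleGraph.Walk.cons hxv.symm SimpleGraph.Walk.nil)
    simp only [SimpleGraph.Walk.support_cons, SimpleGraph.Walk.support_nil, List.mem_cons,
      List.not_mem_nil, or_false] at this
    rcases this with e | e
    · exact hva e.symm
    · exact hxa e.symm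

theorem part_D (h2 : 2 ≤ Fintype.card A) (hG : (adjGraph D).IsTree) {x : A}
    (hx : ∀ P ∈ D, SSP (adjGraph D) x P) (hs : SemiHybridDomain D) : False := by
  obtain ⟨T, a, b, hT, hd, hsub, _, hmin, hleaf⟩ := hs
  have h := HS.of_sh hT hd hsub
  obtain ⟨x, hx, hxz⟩ : ∃ x, (∀ P ∈ D, SSP (adjGraph D) x P) ∧ x ∈ intv T a b := by
    by_cases h1 : x ∈ sideSet T a b
    · exact ⟨a, h.move h2 hG hx h1, left_mem_intv _ _⟩
    by_cases h3 : x ∈ sideSet T b a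
    · exact ⟨b, h.swap.move h2 hG hx h3, right_mem_intv _ _⟩
    exact ⟨x, hx, by rw [h.zone]; tauto⟩
  obtain ⟨z, hz, hzx⟩ : ∃ z, z ∈ intv T a b ∧ z ≠ x := by
    by_cases e : a = x
    · exact ⟨b, right_mem_intv _ _, fun e' => hd.1 (e.trans e'.symm)⟩
    · exact ⟨a, left_mem_intv _ _, e⟩
  obtain ⟨v, hxv, hv, _⟩ := exists_next hG.connected (Ne.symm hzx)
  have hvz : v ∈ intv T a b := by
    have h1 := h.next_zone h2 hG hxz hz hzx hxv hv
    have h3 := h.swap.next_zone h2 hG (by rw [intv_comm]; exact hxz) (by rw [intv_comm]; exact hz) hzx hxv hv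
    rw [h.zone]; tauto
  by_cases huniq : ∀ u, u ∈ intv T a b ∧ (adjGraph D).Adj x u → u = v
  · obtain ⟨P, hP, hn⟩ := hleaf hG x ⟨hxz, v, ⟨hvz, hxv⟩, huniq⟩
    exact hn ((semiSP_iff hG).2 (hx P hP))
  · push Not at huniq
    obtain ⟨u, ⟨huz, hxu⟩, huv⟩ := huniq
    by_cases hab : a ∈ br (adjGraph D) x v ∧ b ∈ br (adjGraph D) x v
    · refine h.core3 h2 hG hmin hx hxz huz hvz hxu hxv huv ?_
      rintro ⟨h1, _⟩
      rcases intv_split hG (mid_mem hG hxv.symm hxu huv.symm) a with h' | h'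
      · exact hab.1 h'
      · rw [intv_comm] at h'; exact h1 h'
    · exact h.core3 h2 hG hmin hx hxz hvz huz hxv hxu huv.symm hab

end Hybrid

/-- on a non-dictatorial, unidimensional domain, there is no
invariant, tops-only and strategy-proof two-voter rule iff the domain is a
semi-hybrid domain satisfying the unique seconds property. -/
theorem stmt3_no_invariant_iff_semihybrid (D : Set (Pref A)) (hD : D.Nonempty)
    (hcard : 3 ≤ Fintype.card A) (huni : Unidimensional D)
    (hnd : ¬ DictatorialDomain D)
    (Pl Pu : Pref A) (hPl : Pl ∈ D) (hPu : Pu ∈ D) (hrev : Reversed Pl Pu) :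
    (¬ ∃ f : (Fin 2 → Pref A) → A,
        IsRule D f ∧ TopsOnly D f ∧ StrategyProof D f ∧ f ![Pl, Pu] = f ![Pu, Pl]) ↔
    (SemiHybridDomain D ∧ UniqueSeconds D) := by
  have h2 : 2 ≤ Fintype.card A := by omega
  obtain ⟨hc, _, hl⟩ := huni
  constructor
  · intro hno
    refine ⟨part_C h2 hc (fun hG x hx => hno (part_B hG hx Pl Pu)), ?_⟩
    by_contra hu
    exact hnd (part_E h2 hc hl hu)
  · rintro ⟨hs, _⟩ ⟨f, hU, hT, hS, hinv⟩
    obtain ⟨hG, x, hx⟩ := part_A h2 hc hPl hPu hrev hU hT hS hinv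
    exact part_D h2 hG hx hs
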